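/- Let D be a non-trivial, non-symmetric 2-(v,k,3) design with 3 dividing r, admitting a flag-transitive, point-primitive automorphism group G that is almost simple with socle X = PSL(2,q), where X acts point-primitively on D with point stabilizer X_α maximal in X. Then X_α is not a dihedral subgroup D_{2(q−1)/gcd(2,q−1)} of order 2(q−1)/gcd(2,q−1); that is, the case v = q(q+1)/2 with X_α the normalizer of a maximal split torus does not occur. -/

import Mathlib

/-!
The group `X ≅ PSL(2,q)` acts on the projective line `Ω` with `q + 1` points. A maximal dihedral
point stabilizer of order `2 (q - 1) / gcd(2, q - 1)` fixes a pair of points of `Ω`, so the points of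
the design are the edges of the complete graph on `Ω` (`exists_edgeMap`) and `v = q (q + 1) / 2`.
For `q ≠ 5`, whether two edges share a vertex can be expressed in terms of `X` alone (`meets_iff`),
so this relation is invariant under `G`. The `2 (q - 1)` edges meeting a given edge `α` are therefore
a union of orbits of `G_α`, and flag-transitivity gives `r |B ∩ Γ(α)| = 3 · 2 (q - 1)` for each
block `B` through `α` (`card_inter_meet`). Write `r = 3s`; then `s ∣ 2 (q - 1)`,
`s (k - 1) = v - 1 = (q - 1)(q + 2) / 2`, and Fisher's inequality gives `k < 3s` (`k_lt_r`).

For odd `q = 2m + 1 ≠ 5` these conditions force `s = m` and `k = 2m + 4`, and `k ∣ v r` then forces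
`m + 2 ∣ 18`, so `q` is 15 or 33, which are not prime powers (`arith_odd`).

For `q = 5` the parameters are `v = 15`, `k = 3`, `r = 21`. As `r` is odd, the 2-group `X_α` fixes a
block through `α`, and then `X_α` is normal in `X`, which is impossible (`no_stabilized_block`).

For even `q` the conditions give `s = q - 1`, `k = q / 2 + 2` and `|B ∩ Γ(α)| = 2`; for `q = 4` the
number of blocks is not an integer. For `q ≥ 8` each flag `(α, B)` is fixed by an involution, which
swaps the two ends of `α`. Hence the edges of `B` form a 2-regular graph, which has
`k ≡ 2 [MOD 4]` vertices. Since `b k = v r`, some block is stabilized by a subgroup of order 4; its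
nontrivial elements fix no vertex of that block, so `4 ∣ k`, a contradiction (`even_case`).
-/


open scoped Pointwise
open Matrix

namespace FT

variable {Pt : Type*}

/-- `IsDesign 𝓑 k lam` says that the family `𝓑` of subsets of the point set `Pt` is the
block set of a `2-(v, k, lam)` design: every block has `k` points and any two distinct
points lie on exactly `lam` common blocks. -/
structure IsDesign (𝓑 : Set (Set Pt)) (k lam : ℕ) : Prop where
  block_card : ∀ B ∈ 𝓑, Nat.card B = k
  pair_count : ∀ x y : Pt, x ≠ y → Nat.card {B : Set Pt | B ∈ 𝓑 ∧ x ∈ B ∧ y ∈ B} = lam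

/-- The group `G` acts on the design with point set `Pt` and block set `𝓑` as a group of
automorphisms. -/
def ActsOn (G : Type*) [Group G] [MulAction G Pt] (𝓑 : Set (Set Pt)) : Prop :=
  ∀ (g : G), ∀ B ∈ 𝓑, g • B ∈ 𝓑

/-- The group `G` is transitive on the flags (incident point-block pairs) of the design. -/
def FlagTransitive (G : Type*) [Group G] [MulAction G Pt] (𝓑 : Set (Set Pt)) : Prop :=
  ∀ B ∈ 𝓑, ∀ C ∈ 𝓑, ∀ x ∈ B, ∀ y ∈ C, ∃ g : G, g • B = C ∧ g • x = y

/-- The action of `G` on `Pt` is primitive: it is transitive and every block of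
imprimitivity is trivial. -/
def PointPrimitive (G : Type*) [Group G] (Pt : Type*) [MulAction G Pt] : Prop :=
  MulAction.IsPretransitive G Pt ∧
    ∀ s : Set Pt, MulAction.IsBlock G s → s.Subsingleton ∨ s = Set.univ

/-- The number of blocks of `𝓑` through the point `x` (the replication number, for a
flag-transitive design). -/
noncomputable def repNum (𝓑 : Set (Set Pt)) (x : Pt) : ℕ :=
  Nat.card {B : Set Pt | B ∈ 𝓑 ∧ x ∈ B}

/-- The projective general linear group `PGL(2,K)`, as the quotient of `GL(2,K)` by its
center. -/
abbrev PGL2 (K : Type*) [Field K] :=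
  GL (Fin 2) K ⧸ Subgroup.center (GL (Fin 2) K)

/-- The projective special linear group `PSL(2,K)`. -/
abbrev PSL2 (K : Type*) [Field K] := Matrix.ProjectiveSpecialLinearGroup (Fin 2) K

end FT

open FT

/-! ### Counting in 2-designs -/

namespace FT
section Design
variable {Pt : Type*} [Fintype Pt]

/-- Double counting of the pairs `β ∈ B` with `β ∈ Γ` and `B ∈ S`, when each point of `Γ`
lies on `m` sets of `S`. -/
lemma sum_inter_eq (S : Set (Set Pt)) (Γ : Set Pt) (m : ℕ)
    (h : ∀ β ∈ Γ, Nat.card {B : Set Pt | B ∈ S ∧ β ∈ B} = m) :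
    ∑ B ∈ S.toFinite.toFinset, (B ∩ Γ).ncard = m * Γ.ncard := by
  classical
  have h1 : ∀ B ∈ S.toFinite.toFinset, (B ∩ Γ).ncard =
      ∑ β ∈ Γ.toFinite.toFinset, if β ∈ B then 1 else 0 := by
    intro B _
    rw [Finset.sum_boole, Nat.cast_id, ← Set.ncard_coe_finset]
    congr 1
    ext β
    simp [and_comm]
  rw [Finset.sum_congr rfl h1, Finset.sum_comm]
  have h2 : ∀ β ∈ Γ.toFinite.toFinset,
      (∑ B ∈ S.toFinite.toFinset, if β ∈ B then 1 else 0) = m := by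
    intro β hβ
    rw [Finset.sum_boole, Nat.cast_id, ← Set.ncard_coe_finset, ← h β (by simpa using hβ)]
    change _ = Set.ncard _
    congr 1
    ext B
    simp
  rw [Finset.sum_congr rfl h2, Finset.sum_const, smul_eq_mul, mul_comm,
    ← Set.ncard_coe_finset]
  simp

variable {G : Type*} [Group G] [MulAction G Pt] {𝓑 : Set (Set Pt)} {k lam r : ℕ}

/-- If `Γ` is a union of orbits of the stabilizer of `α`, not containing `α`, then all blocks through
`α` meet `Γ` equally often by flag-transitivity, and double counting gives the common size. -/
lemma ncard_inter_invariant (hD : IsDesign 𝓑 k lam) (hr : ∀ x : Pt, repNum 𝓑 x = r)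
    (hflag : FlagTransitive G 𝓑) {α : Pt} {Γ : Set Pt} (hα : α ∉ Γ)
    (hΓ : ∀ g : G, g • α = α → g • Γ = Γ) {B : Set Pt} (hB : B ∈ 𝓑) (hαB : α ∈ B) :
    r * (B ∩ Γ).ncard = lam * Γ.ncard := by
  have h1 := sum_inter_eq {B : Set Pt | B ∈ 𝓑 ∧ α ∈ B} Γ lam (by
    intro β hβ
    rw [← hD.pair_count α β (by rintro rfl; exact hα hβ)]
    congr 1
    simp [and_assoc])
  rw [← h1, ← hr α]
  have h2 : ∀ C ∈ ({B : Set Pt | B ∈ 𝓑 ∧ α ∈ B}).toFinite.toFinset,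
      (C ∩ Γ).ncard = (B ∩ Γ).ncard := by
    intro C hC
    simp only [Set.Finite.mem_toFinset, Set.mem_ofPred_eq] at hC
    obtain ⟨g, h3, h4⟩ := hflag B hB C hC.1 α hαB α hC.2
    rw [← h3]
    conv_lhs => rw [← hΓ g h4]
    rw [← Set.smul_set_inter, Set.ncard_smul_set]
  rw [Finset.sum_congr rfl h2, Finset.sum_const, smul_eq_mul, ← Set.ncard_coe_finset]
  simp [repNum]

lemma design_r_eq (hD : IsDesign 𝓑 k lam) (hr : ∀ x : Pt, repNum 𝓑 x = r)
    (α : Pt) :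
    r * (k - 1) = lam * (Nat.card Pt - 1) := by
  have h1 := sum_inter_eq {B : Set Pt | B ∈ 𝓑 ∧ α ∈ B} {α}ᶜ lam (by
    intro β hβ
    rw [← hD.pair_count α β (by rintro rfl; exact hβ rfl)]
    congr 1
    simp [and_assoc])
  rw [Set.ncard_compl, Set.ncard_singleton] at h1
  rw [← h1, ← hr α]
  have h2 : ∀ C ∈ ({B : Set Pt | B ∈ 𝓑 ∧ α ∈ B}).toFinite.toFinset,
      (C ∩ {α}ᶜ).ncard = k - 1 := by
    intro C hC
    simp only [Set.Finite.mem_toFinset, Set.mem_ofPred_eq] at hC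
    rw [← hD.block_card C hC.1, ← Set.sdiff_eq, Set.ncard_sdiff_singleton_of_mem hC.2]
    rfl
  rw [Finset.sum_congr rfl h2, Finset.sum_const, smul_eq_mul, ← Set.ncard_coe_finset]
  simp [repNum]

lemma design_bk_eq (hD : IsDesign 𝓑 k lam) (hr : ∀ x : Pt, repNum 𝓑 x = r) :
    Nat.card 𝓑 * k = Nat.card Pt * r := by
  have h1 := sum_inter_eq 𝓑 Set.univ r (fun β _ => hr β)
  rw [Set.ncard_univ, mul_comm r] at h1
  rw [← h1]
  have h2 : ∀ C ∈ 𝓑.toFinite.toFinset, (C ∩ Set.univ).ncard = k := by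
    intro C hC
    rw [Set.inter_univ]
    exact hD.block_card C (by simpa using hC)
  rw [Finset.sum_congr rfl h2, Finset.sum_const, smul_eq_mul, ← Set.ncard_coe_finset]
  simp

/-- Fisher's inequality: the point-block incidence map over `ℚ` is injective, since its Gram matrix
`(r - lam) I + lam J` is nonsingular. -/
lemma fisher (hD : IsDesign 𝓑 k lam) (hr : ∀ x : Pt, repNum 𝓑 x = r) (hlt : lam < r) :
    Nat.card Pt ≤ Nat.card 𝓑 := by
  classical
  have : Fintype 𝓑 := Fintype.ofFinite _
  let f : (Pt → ℚ) →ₗ[ℚ] (𝓑 → ℚ) :=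
    { toFun := fun x B => ∑ p : Pt, if p ∈ B.1 then x p else 0
      map_add' := by
        intro x y; ext B
        simp only [Pi.add_apply, ← Finset.sum_add_distrib]
        exact Finset.sum_congr rfl fun p _ => by split_ifs <;> simp
      map_smul' := by
        intro c x; ext B
        simp [Finset.mul_sum] }
  have hinj : Function.Injective f := by
    rw [injective_iff_map_eq_zero]
    intro x hx
    have hcount : ∀ p s : Pt, (∑ B : 𝓑, if p ∈ B.1 then (if s ∈ B.1 then x s else 0) else 0) =
        (if p = s then (r : ℚ) else lam) * x s := by
      intro p s
      have e1 : ∀ B : 𝓑, (if p ∈ B.1 then (if s ∈ B.1 then x s else 0) else 0) =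
          (if p ∈ B.1 ∧ s ∈ B.1 then 1 else 0) * x s := by
        intro B; by_cases h1 : p ∈ B.1 <;> by_cases h2 : s ∈ B.1 <;> simp [h1, h2]
      rw [Finset.sum_congr rfl fun B _ => e1 B, ← Finset.sum_mul, Finset.sum_boole]
      congr 1
      have e2 : (Finset.univ.filter fun B : 𝓑 => p ∈ B.1 ∧ s ∈ B.1).card =
          Nat.card {B : Set Pt | B ∈ 𝓑 ∧ p ∈ B ∧ s ∈ B} := by
        rw [← Set.ncard_coe_finset]
        change _ = Set.ncard _
        rw [← Set.ncard_image_of_injective _ Subtype.val_injective]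
        congr 1
        ext B
        simp
        tauto
      rw [e2]
      split_ifs with h
      · subst h
        rw [← hr p]
        unfold repNum
        simp
      · rw [hD.pair_count p s h]
    have key : ∀ p : Pt, ((r : ℚ) - lam) * x p + lam * ∑ s, x s = 0 := by
      intro p
      have h0 : ∑ B : 𝓑, (if p ∈ B.1 then f x B else 0) = 0 := by simp [hx]
      have h1 : ∑ B : 𝓑, (if p ∈ B.1 then f x B else 0) =
          ∑ s : Pt, (if p = s then (r : ℚ) else lam) * x s := by
        rw [← Finset.sum_congr rfl fun s _ => hcount p s, Finset.sum_comm]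
        refine Finset.sum_congr rfl fun B _ => ?_
        split_ifs <;> simp [f]
      rw [h1] at h0
      rw [← h0, Finset.mul_sum, ← sub_eq_zero]
      have h2 : ∀ s, (if p = s then (r : ℚ) else lam) * x s =
          (if p = s then ((r : ℚ) - lam) * x s else 0) + lam * x s := by
        intro s; split_ifs <;> ring
      rw [Finset.sum_congr rfl fun s _ => h2 s, Finset.sum_add_distrib]
      simp
    have hlt' : (0 : ℚ) < (r : ℚ) - lam := by
      rw [sub_pos]; exact_mod_cast hlt
    have hS : ∑ s, x s = 0 := by
      have h1 : ∑ p : Pt, (((r : ℚ) - lam) * x p + lam * ∑ s, x s) = 0 :=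
        Finset.sum_eq_zero fun p _ => key p
      rw [Finset.sum_add_distrib, ← Finset.mul_sum, Finset.sum_const, nsmul_eq_mul] at h1
      have h2 : ((r : ℚ) - lam + (Finset.univ : Finset Pt).card * lam) * ∑ s, x s = 0 := by
        linear_combination h1
      rcases mul_eq_zero.1 h2 with h | h
      · have : (0 : ℚ) ≤ (Finset.univ : Finset Pt).card * lam := by positivity
        linarith
      · exact h
    funext p
    have := key p
    rw [hS, mul_zero, add_zero] at this
    simpa [hlt'.ne'] using this
  have := LinearMap.finrank_le_finrank_of_injective hinj
  simpa [Nat.card_eq_fintype_card] using this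

end Design
end FT

/-! ### The action of PSL(2,q) on the projective line -/

namespace FT
section Line
open scoped LinearAlgebra.Projectivization
open Projectivization

variable {F : Type} [Field F]

/-- The projective line `PG(1,F)`. -/
abbrev PLine (F : Type) [Field F] := ℙ F (Fin 2 → F)

/-- The point `[1 : 0]` of the projective line. -/
def ptInf : PLine F := mk F ![1, 0] (by simp)
/-- The point `[0 : 1]` of the projective line. -/
def ptZero : PLine F := mk F ![0, 1] (by simp)

lemma ptInf_ne_ptZero : (ptInf : PLine F) ≠ ptZero := by
  unfold ptInf ptZero
  rw [Ne, mk_eq_mk_iff']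
  rintro ⟨a, ha⟩
  have := congrFun ha 0
  simp at this

lemma card_pline [Fintype F] : Nat.card (PLine F) = Fintype.card F + 1 := by
  rw [Projectivization.card_of_finrank_two F _ (by simp), Nat.card_eq_fintype_card]

lemma psl_two_trans {a b c d : PLine F} (hab : a ≠ b) (hcd : c ≠ d) :
    ∃ g : PSL2 F, g • a = c ∧ g • b = d := by
  have h := (inferInstance : MulAction.IsMultiplyPretransitive
    (Matrix.SpecialLinearGroup (Fin 2) F) (PLine F) 2)
  rw [MulAction.is_two_pretransitive_iff] at h
  obtain ⟨g, h1, h2⟩ := h hab hcd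
  exact ⟨(g : PSL2 F), h1, h2⟩

lemma sl_smul_mk_eq (M : Matrix.SpecialLinearGroup (Fin 2) F) {v : Fin 2 → F} (hv : v ≠ 0) :
    (M : PSL2 F) • (mk F v hv : PLine F) = mk F v hv ↔ ∃ a : F, a • v = M.1 *ᵥ v := by
  rw [Matrix.ProjectiveSpecialLinearGroup.smul_proj_mk, smul_mk, mk_eq_mk_iff']
  rfl

lemma fix_inf (M : Matrix.SpecialLinearGroup (Fin 2) F) :
    (M : PSL2 F) • (ptInf : PLine F) = ptInf ↔ M.1 1 0 = 0 := by
  unfold ptInf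
  rw [sl_smul_mk_eq]
  constructor
  · rintro ⟨a, ha⟩
    have := congrFun ha 1
    simpa using this.symm
  · intro h
    refine ⟨M.1 0 0, ?_⟩
    ext i; fin_cases i <;> simp [h]

lemma fix_zero (M : Matrix.SpecialLinearGroup (Fin 2) F) :
    (M : PSL2 F) • (ptZero : PLine F) = ptZero ↔ M.1 0 1 = 0 := by
  unfold ptZero
  rw [sl_smul_mk_eq]
  constructor
  · rintro ⟨a, ha⟩
    have := congrFun ha 0
    simpa using this.symm
  · intro h
    refine ⟨M.1 1 1, ?_⟩
    ext i; fin_cases i <;> simp [h]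

/-- An element fixing two points is conjugate to the image of a diagonal matrix. -/
lemma psl_fix_two [Fintype F] {a b : PLine F} (hab : a ≠ b) {g : PSL2 F}
    (ha : g • a = a) (hb : g • b = b) : g ^ (Fintype.card F - 1) = 1 := by
  obtain ⟨h, h1, h2⟩ := psl_two_trans hab (ptInf_ne_ptZero (F := F))
  have hconj : (h * g * h⁻¹) ^ (Fintype.card F - 1) = 1 → g ^ (Fintype.card F - 1) = 1 := by
    rw [conj_pow]; intro h3; simpa using h3
  apply hconj
  have e1 : (h * g * h⁻¹) • (ptInf : PLine F) = ptInf := by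
    rw [← h1]; simp [mul_smul, ha]
  have e2 : (h * g * h⁻¹) • (ptZero : PLine F) = ptZero := by
    rw [← h2]; simp [mul_smul, hb]
  generalize h * g * h⁻¹ = k at e1 e2
  induction k using QuotientGroup.induction_on with | H M =>
  rw [fix_inf] at e1
  rw [fix_zero] at e2
  have hM : M ^ (Fintype.card F - 1) = 1 := by
    apply Subtype.ext
    have hd : M.1 = Matrix.diagonal ![M.1 0 0, M.1 1 1] := by
      ext i j; fin_cases i <;> fin_cases j <;> simp [e1, e2]
    have hdet := M.2
    rw [Matrix.det_fin_two, e1, e2] at hdet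
    have h0 : M.1 0 0 ≠ 0 := by intro h; simp [h] at hdet
    have h1 : M.1 1 1 ≠ 0 := by intro h; simp [h] at hdet
    rw [Matrix.SpecialLinearGroup.coe_pow, hd, Matrix.diagonal_pow, Matrix.SpecialLinearGroup.coe_one,
      ← Matrix.diagonal_one]
    congr 1
    ext i; fin_cases i
    · simpa using FiniteField.pow_card_sub_one_eq_one _ h0
    · simpa using FiniteField.pow_card_sub_one_eq_one _ h1
  rw [← QuotientGroup.mk_pow, hM]; rfl

lemma psl_fix_three {a b c : PLine F} (hab : a ≠ b) (hac : c ≠ a) (hbc : c ≠ b) {g : PSL2 F}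
    (ha : g • a = a) (hb : g • b = b) (hc : g • c = c) : g = 1 := by
  obtain ⟨h, h1, h2⟩ := psl_two_trans hab (ptInf_ne_ptZero (F := F))
  have hconj : (h * g * h⁻¹) = 1 → g = 1 := by
    intro h3; simpa using h3
  apply hconj
  have e1 : (h * g * h⁻¹) • (ptInf : PLine F) = ptInf := by
    rw [← h1]; simp [mul_smul, ha]
  have e2 : (h * g * h⁻¹) • (ptZero : PLine F) = ptZero := by
    rw [← h2]; simp [mul_smul, hb]
  have e3 : (h * g * h⁻¹) • (h • c) = h • c := by
    simp [mul_smul, hc]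
  have n1 : h • c ≠ ptInf := by
    rw [← h1]; simpa using hac
  have n2 : h • c ≠ ptZero := by
    rw [← h2]; simpa using hbc
  generalize h * g * h⁻¹ = k at e1 e2 e3
  generalize h • c = d at e3 n1 n2
  induction k using QuotientGroup.induction_on with | H M =>
  induction d using Projectivization.ind with | h v hv =>
  rw [fix_inf] at e1
  rw [fix_zero] at e2
  rw [sl_smul_mk_eq] at e3
  obtain ⟨t, ht⟩ := e3
  have hv1 : v 1 ≠ 0 := by
    intro h0
    apply n1
    unfold ptInf
    rw [mk_eq_mk_iff']
    exact ⟨v 0, by ext i; fin_cases i <;> simp [h0]⟩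
  have hv0 : v 0 ≠ 0 := by
    intro h0
    apply n2
    unfold ptZero
    rw [mk_eq_mk_iff']
    exact ⟨v 1, by ext i; fin_cases i <;> simp [h0]⟩
  have t0 := congrFun ht 0
  have t1 := congrFun ht 1
  simp [e1, e2, hv0, hv1] at t0 t1
  have : M ∈ Subgroup.center (Matrix.SpecialLinearGroup (Fin 2) F) := by
    rw [Matrix.SpecialLinearGroup.mem_center_iff]
    have hM : Matrix.scalar (Fin 2) t = M.1 := by
      ext i j; fin_cases i <;> fin_cases j <;> simp [e1, e2, ← t0, ← t1]
    refine ⟨t, ?_, hM⟩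
    have := M.2
    rw [← hM] at this
    simpa using this
  exact (QuotientGroup.eq_one_iff M).2 this

/-- Each point `w` is fixed by a transvection `u`, and all conjugates of `u` by elements fixing `w`
lie in the same abelian unipotent group. -/
lemma psl_exists_unipotent {p : ℕ} [CharP F p] (w : PLine F) :
    ∃ u : PSL2 F, u ≠ 1 ∧ u ^ p = 1 ∧ u • w = w ∧
      ∀ x : PSL2 F, x • w = w → Commute (x * u * x⁻¹) u := by
  obtain ⟨b, hb⟩ : ∃ b, w ≠ b := by
    by_cases h : w = ptInf
    · exact ⟨ptZero, h ▸ ptInf_ne_ptZero⟩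
    · exact ⟨ptInf, h⟩
  obtain ⟨h, h1, -⟩ := psl_two_trans hb (ptInf_ne_ptZero (F := F))
  suffices H : ∃ u : PSL2 F, u ≠ 1 ∧ u ^ p = 1 ∧ u • (ptInf : PLine F) = ptInf ∧
      ∀ x : PSL2 F, x • (ptInf : PLine F) = ptInf → Commute (x * u * x⁻¹) u by
    obtain ⟨u, u1, u2, u3, u4⟩ := H
    refine ⟨h⁻¹ * u * h, ?_, ?_, ?_, ?_⟩
    · intro h3
      apply u1
      have := congrArg (fun y => h * y * h⁻¹) h3
      simpa [mul_assoc] using this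
    · have := conj_pow (a := h⁻¹) (b := u) (i := p)
      rw [inv_inv, u2] at this
      simpa using this
    · rw [mul_smul, mul_smul, h1, u3, ← h1, inv_smul_smul]
    · intro x hx
      have := u4 (h * x * h⁻¹) (by rw [← h1]; simp [mul_smul, hx])
      have h5 : x * (h⁻¹ * u * h) * x⁻¹ = h⁻¹ * (h * x * h⁻¹ * u * (h * x * h⁻¹)⁻¹) * h := by group
      rw [h5]
      unfold Commute SemiconjBy at this ⊢
      have h6 := congrArg (fun y => h⁻¹ * y * h) this
      calc _ = h⁻¹ * (h * x * h⁻¹ * u * (h * x * h⁻¹)⁻¹ * u) * h := by group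
        _ = _ := h6
        _ = _ := by group
  let U : F → Matrix.SpecialLinearGroup (Fin 2) F := fun t => ⟨!![1, t; 0, 1], by simp⟩
  have hUmul : ∀ s t, U s * U t = U (s + t) := by
    intro s t
    apply Subtype.ext
    rw [Matrix.SpecialLinearGroup.coe_mul]
    simp [U, add_comm]
  have hUpow : ∀ m : ℕ, U 1 ^ m = U m := by
    intro m
    induction m with
    | zero =>
      apply Subtype.ext
      rw [pow_zero, Matrix.SpecialLinearGroup.coe_one]
      simp [U, Matrix.one_fin_two]
    | succ m ih => rw [pow_succ, ih, hUmul]; simp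
  refine ⟨(U 1 : PSL2 F), ?_, ?_, ?_, ?_⟩
  · intro h0
    have := (QuotientGroup.eq_one_iff (U 1)).1 h0
    rw [Matrix.SpecialLinearGroup.mem_center_iff] at this
    obtain ⟨r, -, hr⟩ := this
    have := congrFun (congrFun hr 0) 1
    simp [U] at this
  · rw [← QuotientGroup.mk_pow, hUpow]
    have : U (p : F) = 1 := by
      apply Subtype.ext; simp [U, Matrix.one_fin_two]
    rw [this]; rfl
  · rw [fix_inf]; simp [U]
  · intro x hx
    induction x using QuotientGroup.induction_on with | H M =>
    rw [fix_inf] at hx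
    have key : ∃ t, M * U 1 * M⁻¹ = U t := by
      have hdet := M.2
      rw [Matrix.det_fin_two, hx] at hdet
      refine ⟨M.1 0 0 ^ 2, ?_⟩
      rw [mul_inv_eq_iff_eq_mul]
      apply Subtype.ext
      rw [Matrix.SpecialLinearGroup.coe_mul, Matrix.SpecialLinearGroup.coe_mul]
      ext i j
      fin_cases i <;> fin_cases j <;>
        simp [U, hx, Matrix.mul_apply, Fin.sum_univ_two]
      linear_combination (-M.1 0 0) * hdet
    obtain ⟨t, ht⟩ := key
    have : Commute (U t) (U 1) := by
      unfold Commute SemiconjBy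
      rw [hUmul, hUmul, add_comm]
    have h7 : ((M : PSL2 F) * (U 1 : PSL2 F) * (M : PSL2 F)⁻¹) = (U t : PSL2 F) := by
      rw [← ht]; rfl
    rw [h7]
    exact this.map (QuotientGroup.mk' _)

/-- A matrix `M` representing `g` satisfies `M ^ q = M` with `q = |F|`, so it is annihilated by the
product of the `X - a` over `a ∈ F` and has an eigenvector in `F ^ 2`. -/
lemma psl_exists_fixed [Fintype F] {g : PSL2 F}
    (hg : g ^ ((Fintype.card F - 1) / Nat.gcd 2 (Fintype.card F - 1)) = 1) :
    ∃ w : PLine F, g • w = w := by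
  classical
  induction g using QuotientGroup.induction_on with | H M =>
  set q := Fintype.card F
  have hq : 1 < q := Fintype.one_lt_card
  have hM : M.1 ^ q = M.1 := by
    rw [← QuotientGroup.mk_pow, QuotientGroup.eq_one_iff,
      Matrix.SpecialLinearGroup.mem_center_iff] at hg
    obtain ⟨r, hr, hr'⟩ := hg
    rw [Fintype.card_fin] at hr
    have h1 : (q - 1) / Nat.gcd 2 (q - 1) * Nat.gcd 2 (q - 1) = q - 1 :=
      Nat.div_mul_cancel (Nat.gcd_dvd_right _ _)
    have h2 : M.1 ^ (q - 1) = 1 := by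
      rw [← h1, pow_mul, ← Matrix.SpecialLinearGroup.coe_pow, ← hr', ← map_pow]
      rcases (Nat.dvd_prime Nat.prime_two).1 (Nat.gcd_dvd_left 2 (q - 1)) with h | h
      · have hodd : Odd (q - 1) := by
          rw [← Nat.not_even_iff_odd, even_iff_two_dvd]
          intro h2
          rw [Nat.gcd_eq_left h2] at h; omega
        have hchar : ringChar F = 2 := by
          by_contra hne
          have := FiniteField.odd_card_of_char_ne_two hne
          have hq2 : q % 2 = 1 := this
          obtain ⟨t, ht⟩ := hodd
          omega
        have : CharP F 2 := ringChar.of_eq hchar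
        have hr1 : r = 1 := by
          have : (r - 1) ^ 2 = 0 := by rw [CharTwo.sub_eq_add, CharTwo.add_sq, hr]; simp [CharTwo.add_self_eq_zero]
          exact sub_eq_zero.1 (by simpa using this)
        simp [hr1]
      · rw [h, hr, map_one]
    calc M.1 ^ q = M.1 ^ (q - 1) * M.1 := by rw [← pow_succ]; congr 1; omega
      _ = M.1 := by rw [h2, one_mul]
  have hprod : ∏ a : F, (Polynomial.X - Polynomial.C a) = (Polynomial.X ^ q - Polynomial.X : Polynomial F) := by
    have h := Polynomial.prod_multiset_X_sub_C_of_monic_of_roots_card_eq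
      (p := (Polynomial.X ^ q - Polynomial.X : Polynomial F))
      (Polynomial.monic_X_pow_sub (by simpa using hq))
      (by rw [FiniteField.roots_X_pow_card_sub_X, FiniteField.X_pow_card_sub_X_natDegree_eq F hq]; rfl)
    rw [FiniteField.roots_X_pow_card_sub_X] at h
    exact h
  have hz : ∏ a : F, (M.1 - Matrix.scalar (Fin 2) a).det = 0 := by
    let φ : Polynomial F →* F :=
      Matrix.detMonoidHom.comp (Polynomial.aeval M.1 : Polynomial F →ₐ[F] _).toRingHom.toMonoidHom
    have h1 := congrArg φ hprod
    rw [map_prod] at h1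
    have h2 : φ (Polynomial.X ^ q - Polynomial.X : Polynomial F) = 0 := by
      simp [φ, hM]
    rw [h2] at h1
    rw [← h1]
    refine Finset.prod_congr rfl fun a _ => ?_
    simp [φ, Matrix.algebraMap_eq_diagonal, Matrix.scalar_apply]
    rfl
  obtain ⟨a, -, ha⟩ := Finset.prod_eq_zero_iff.1 hz
  obtain ⟨v, hv, hv'⟩ := Matrix.exists_mulVec_eq_zero_iff.2 ha
  refine ⟨mk F v hv, ?_⟩
  rw [sl_smul_mk_eq]
  refine ⟨a, ?_⟩
  rw [Matrix.sub_mulVec, sub_eq_zero] at hv'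
  rw [hv']
  simp [Matrix.scalar_apply]
end Line
end FT

/-! ### Points as edges of the projective line -/

namespace FT
section Abstract

/-- The properties of the action of `PSL(2,q)`, `q` a power of `p`, on the projective line that are used
below; here `n` stands for `(q - 1) / gcd(2, q - 1)`. Abstracting them allows working with any group
`X` isomorphic to `PSL(2,q)`. -/
structure IsLineAction (X Ω : Type*) [Group X] [MulAction X Ω] (q p n : ℕ) : Prop where
  card : Nat.card Ω = q + 1
  two_trans : ∀ {a b c d : Ω}, a ≠ b → c ≠ d → ∃ g : X, g • a = c ∧ g • b = d
  fix_two : ∀ {a b : Ω} {g : X}, a ≠ b → g • a = a → g • b = b → g ^ (q - 1) = 1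
  fix_three : ∀ {a b c : Ω} {g : X}, a ≠ b → c ≠ a → c ≠ b → g • a = a → g • b = b →
    g • c = c → g = 1
  unipotent : ∀ w : Ω, ∃ u : X, u ≠ 1 ∧ u ^ p = 1 ∧ u • w = w ∧
      ∀ x : X, x • w = w → Commute (x * u * x⁻¹) u
  fixed : ∀ g : X, g ^ n = 1 → ∃ w : Ω, g • w = w

variable {X Ω : Type*} [Group X] [MulAction X Ω] [Fintype Ω]

/-- The number of fixed points of an element of `l`-power order is congruent to the number of points
modulo the prime `l`. -/
lemma fixed_modEq {Y : Type*} [MulAction X Y] [Finite Y] {l : ℕ} (hl : l.Prime) {m : ℕ}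
    {g : X} (hg : g ^ l ^ m = 1) :
    Nat.card Y ≡ Nat.card {w : Y | g • w = w} [MOD l] := by
  classical
  have : Fintype Y := Fintype.ofFinite _
  have := Fact.mk hl
  let f : Function.End Y := fun w => g • w
  have hf : f ^ l ^ m = 1 := by
    have : ∀ i : ℕ, f ^ i = (fun w => (g ^ i) • w : Function.End Y) := by
      intro i
      induction i with
      | zero => funext w; simp; rfl
      | succ i ih =>
        rw [pow_succ, ih]
        funext w
        change g ^ i • g • w = _
        rw [pow_succ, mul_smul]
    rw [this, hg]
    funext w; simp; rfl
  have h := Equiv.Perm.card_fixedPoints_modEq hf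
  rw [Nat.card_eq_fintype_card, Nat.card_eq_fintype_card]
  convert h using 2
  rfl

/-- A dihedral subgroup of order `2n` stabilizes a pair of points: an element `σ` of prime order `l ∣ n`
in its rotation subgroup fixes a point and hence, by counting modulo `l`, exactly two points; the
dihedral group normalizes `⟨σ⟩`, so it permutes these two points. -/
lemma dihedral_pair {q p n : ℕ} (hL : IsLineAction X Ω q p n) (hn : 2 ≤ n) (hnq : n ∣ q - 1)
    (hq : 1 ≤ q)
    (H : Subgroup X) (e : H ≃* DihedralGroup n) :
    ∃ a b : Ω, ∃ ρ : X, a ≠ b ∧ ρ ∈ H ∧ ρ • a = a ∧ ρ • b = b ∧ (3 ≤ n → ρ ^ 2 ≠ 1) ∧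
      ∀ h ∈ H, (h • a = a ∧ h • b = b) ∨ (h • a = b ∧ h • b = a) := by
  classical
  have hn0 : NeZero n := ⟨by omega⟩
  set l := n.minFac with hl
  have hlp : l.Prime := Nat.minFac_prime (by omega)
  obtain ⟨m, hm⟩ : l ∣ n := Nat.minFac_dvd n
  have hm0 : 0 < m := by
    rcases Nat.eq_zero_or_pos m with h | h
    · subst h; omega
    · exact h
  set ρ : H := e.symm (DihedralGroup.r 1) with hρ
  set σ : H := ρ ^ m with hσ
  have hord : orderOf ρ = n := by
    rw [hρ, MulEquiv.orderOf_eq, DihedralGroup.orderOf_r_one]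
  have hρn : ρ ^ n = 1 := by rw [← hord]; exact pow_orderOf_eq_one ρ
  have hσl : σ ^ l = 1 := by rw [hσ, ← pow_mul, mul_comm, ← hm, hρn]
  have hσ1 : σ ≠ 1 := by
    intro h
    have := orderOf_dvd_of_pow_eq_one h
    rw [hord] at this
    have h1 := Nat.le_of_dvd hm0 this
    have h2 := hlp.two_le
    nlinarith
  have hσ1' : (σ : X) ≠ 1 := by simpa using hσ1
  obtain ⟨a, ha⟩ := hL.fixed (ρ : X) (by exact_mod_cast congrArg Subtype.val hρn)
  have hpow : ∀ {w : Ω} (i : ℕ), (ρ : X) • w = w → ((ρ : X) ^ i) • w = w := by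
    intro w i hw
    induction i with
    | zero => simp
    | succ i ih => rw [pow_succ, mul_smul, hw, ih]
  have hσa : (σ : X) • a = a := by
    rw [hσ]; push_cast; exact hpow m ha
  -- the number of fixed points of `σ` is congruent to `q + 1 ≡ 2` modulo `l`
  have hmod := fixed_modEq (Y := Ω) (m := 1) hlp (g := (σ : X))
    (by rw [pow_one]; exact_mod_cast congrArg Subtype.val hσl)
  rw [hL.card] at hmod
  have h2 : q + 1 ≡ 2 [MOD l] := by
    have : l ∣ q - 1 := (Dvd.intro _ hm.symm).trans hnq
    have h3 := (Nat.modEq_zero_iff_dvd.2 this).add_right 2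
    have : q - 1 + 2 = q + 1 := by omega
    rw [this] at h3
    simpa using h3
  obtain ⟨b, hb, hba⟩ : ∃ b, (σ : X) • b = b ∧ b ≠ a := by
    by_contra! hcon
    have : {w : Ω | (σ : X) • w = w} = {a} := by
      ext w
      simp only [Set.mem_ofPred_eq, Set.mem_singleton_iff]
      exact ⟨hcon w, fun h => h ▸ hσa⟩
    rw [this] at hmod
    have h4 : 1 ≡ 2 [MOD l] := by
      have := hmod.symm.trans h2
      simpa using this
    have := (Nat.modEq_iff_dvd' (by norm_num)).1 h4
    have := Nat.le_of_dvd (by norm_num) this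
    have := hlp.two_le
    omega
  have hfix : ∀ w, (σ : X) • w = w → w = a ∨ w = b := by
    intro w hw
    by_contra! hcon
    exact hσ1' (hL.fix_three hba.symm hcon.1 hcon.2 hσa hb hw)
  have hnorm : ∀ h ∈ H, ∀ w : Ω, (σ : X) • w = w → (σ : X) • (h • w) = h • w := by
    intro h hh w hw
    have key : ∀ d : DihedralGroup n, d⁻¹ * (DihedralGroup.r 1) ^ m * d = (DihedralGroup.r 1) ^ m ∨
        d⁻¹ * (DihedralGroup.r 1) ^ m * d = ((DihedralGroup.r 1) ^ m)⁻¹ := by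
      intro d
      rw [DihedralGroup.r_one_pow]
      rcases d with i | i
      · left; simp
      · right; simp
    have hk : (⟨h, hh⟩ : H)⁻¹ * σ * ⟨h, hh⟩ = σ ∨ (⟨h, hh⟩ : H)⁻¹ * σ * ⟨h, hh⟩ = σ⁻¹ := by
      rcases key (e ⟨h, hh⟩) with h1 | h1
      · left; apply e.injective; simpa [hσ, hρ] using h1
      · right; apply e.injective; simpa [hσ, hρ] using h1
    have hk' : (h⁻¹ * σ * h) • w = w := by
      rcases hk with h1 | h1
      · have := congrArg Subtype.val h1
        push_cast at this
        rw [this, hw]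
      · have := congrArg Subtype.val h1
        push_cast at this
        rw [this, inv_smul_eq_iff, hw]
    rw [mul_assoc, mul_smul, inv_smul_eq_iff, mul_smul] at hk'
    exact hk'
  have hperm : ∀ h ∈ H, (h • a = a ∧ h • b = b) ∨ (h • a = b ∧ h • b = a) := by
    intro h hh
    have h1 := hfix _ (hnorm h hh a hσa)
    have h2 := hfix _ (hnorm h hh b hb)
    have h3 : h • a ≠ h • b := by simpa using hba.symm
    rcases h1 with h1 | h1 <;> rcases h2 with h2 | h2
    · rw [h1, h2] at h3; exact absurd rfl h3
    · exact .inl ⟨h1, h2⟩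
    · exact .inr ⟨h1, h2⟩
    · rw [h1, h2] at h3; exact absurd rfl h3
  refine ⟨a, b, ρ, hba.symm, ρ.2, ha, ?_, ?_, hperm⟩
  · rcases hperm ρ ρ.2 with h | h
    · exact h.2
    · exact absurd (h.1.symm.trans ha) hba
  · intro h3 h4
    have h5 : ρ ^ 2 = 1 := by
      apply Subtype.ext; exact_mod_cast h4
    have := Nat.le_of_dvd (by norm_num) (orderOf_dvd_of_pow_eq_one h5)
    omega

/-- `E` is an `X`-equivariant bijection from `Pt` to the 2-subsets of `Ω`; the points of the design
become the edges of the complete graph on `Ω`. -/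
structure IsEdgeMap (X : Type*) {Ω Pt : Type*} [Group X] [MulAction X Ω] [DecidableEq Ω]
    [MulAction X Pt] (E : Pt → Finset Ω) : Prop where
  card_two : ∀ β, (E β).card = 2
  smul : ∀ (x : X) β, E (x • β) = x • E β
  inj : Function.Injective E
  surj : ∀ s : Finset Ω, s.card = 2 → ∃ β, E β = s

variable {Pt : Type*} [DecidableEq Ω]

lemma card_points [Fintype Pt] {E : Pt → Finset Ω} {q : ℕ} (hc : Nat.card Ω = q + 1)
    (h2 : ∀ β, (E β).card = 2) (hinj : Function.Injective E)
    (hsurj : ∀ s : Finset Ω, s.card = 2 → ∃ β, E β = s) :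
    Nat.card Pt = (q + 1).choose 2 := by
  classical
  rw [Nat.card_eq_fintype_card] at hc ⊢
  rw [← hc, ← Finset.card_univ (α := Ω), ← Finset.card_powersetCard, ← Finset.card_univ,
    ← Finset.card_image_of_injective _ hinj]
  congr 1
  ext s
  simp only [Finset.mem_image, Finset.mem_univ, true_and, Finset.mem_powersetCard,
    Finset.subset_univ]
  exact ⟨fun ⟨β, h⟩ => h ▸ h2 β, hsurj s⟩

lemma card_meet [Fintype Pt] {E : Pt → Finset Ω} {q : ℕ} (hq : 1 ≤ q) (hc : Nat.card Ω = q + 1)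
    (h2 : ∀ β, (E β).card = 2) (hinj : Function.Injective E)
    (hsurj : ∀ s : Finset Ω, s.card = 2 → ∃ β, E β = s) (α : Pt) :
    ({β | β ≠ α ∧ ∃ w, w ∈ E α ∧ w ∈ E β} : Set Pt).ncard = 2 * (q - 1) := by
  classical
  have hv := card_points hc h2 hinj hsurj
  -- the edges disjoint from `E α` are the 2-subsets of its complement
  have hdis : ({β | Disjoint (E α) (E β)} : Set Pt).ncard = (q - 1).choose 2 := by
    have h1 : (Finset.univ \ E α).card = q - 1 := by
      rw [Finset.card_sdiff_of_subset (Finset.subset_univ _), h2, Finset.card_univ,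
        ← Nat.card_eq_fintype_card, hc]
      omega
    rw [← h1, ← Finset.card_powersetCard, ← Set.ncard_image_of_injective _ hinj,
      ← Set.ncard_coe_finset]
    congr 1
    ext s
    simp only [Set.mem_image, Set.mem_ofPred_eq, Finset.mem_coe, Finset.mem_powersetCard]
    constructor
    · rintro ⟨β, h3, rfl⟩
      refine ⟨?_, h2 β⟩
      intro w hw
      simp only [Finset.mem_sdiff, Finset.mem_univ, true_and]
      exact fun h => Finset.disjoint_left.1 h3 h hw
    · rintro ⟨h3, h4⟩
      obtain ⟨β, rfl⟩ := hsurj s h4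
      refine ⟨β, ?_, rfl⟩
      rw [Finset.disjoint_left]
      intro w hw hw'
      have := h3 hw'
      simp [hw] at this
  have hcompl : ({β | β ≠ α ∧ ∃ w, w ∈ E α ∧ w ∈ E β} : Set Pt) =
      (insert α {β | Disjoint (E α) (E β)})ᶜ := by
    ext β
    simp only [Set.mem_ofPred_eq, Set.mem_compl_iff, Set.mem_insert_iff, not_or,
      Finset.not_disjoint_iff]
  have hnot : α ∉ ({β | Disjoint (E α) (E β)} : Set Pt) := by
    simp only [Set.mem_ofPred_eq, disjoint_self]
    intro h
    have := h2 α
    simp [h] at this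
  rw [hcompl, Set.ncard_compl, Set.ncard_insert_of_notMem hnot, hdis, hv]
  obtain ⟨m, rfl⟩ : ∃ m, q = m + 1 := ⟨q - 1, by omega⟩
  simp [Nat.choose_succ_succ']
  omega

variable [MulAction X Pt]

/-- By maximality the point stabilizer is the full stabilizer of a pair of points of the line, which
identifies `Pt` with the set of such pairs. For `n ≥ 3` a generator of the rotation subgroup of the
stabilizer of `β` is not an involution and fixes both ends of the edge `E β`. -/
lemma exists_edgeMap {q p n : ℕ} (hL : IsLineAction X Ω q p n) (hn : 2 ≤ n) (hnq : n ∣ q - 1)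
    (hq : 4 ≤ q) [MulAction.IsPretransitive X Pt] {α : Pt}
    (hmax : IsCoatom (MulAction.stabilizer X α))
    (e : MulAction.stabilizer X α ≃* DihedralGroup n) :
    ∃ E : Pt → Finset Ω, IsEdgeMap X E ∧
      (3 ≤ n → ∀ β, ∃ x : X, x • β = β ∧ x ^ 2 ≠ 1 ∧ ∀ w ∈ E β, x • w = w) := by
  obtain ⟨a, b, ρ, hab, hρ, hρa, hρb, hρ2, hH⟩ := dihedral_pair hL hn hnq (by omega) _ e
  have hle : MulAction.stabilizer X α ≤ MulAction.stabilizer X ({a, b} : Finset Ω) := by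
    intro h hh
    rw [MulAction.mem_stabilizer_iff, Finset.smul_finset_insert, Finset.smul_finset_singleton]
    rcases hH h hh with ⟨h1, h2⟩ | ⟨h1, h2⟩
    · rw [h1, h2]
    · rw [h1, h2, Finset.pair_comm]
  have hstab : MulAction.stabilizer X α = MulAction.stabilizer X ({a, b} : Finset Ω) := by
    by_contra hne
    have htop := hmax.2 _ (lt_of_le_of_ne hle hne)
    obtain ⟨c, hc⟩ : ∃ c, c ∉ ({a, b} : Finset Ω) := by
      by_contra! hcon
      have h1 := Finset.card_le_card (fun c _ => hcon c : (Finset.univ : Finset Ω) ⊆ {a, b})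
      have h2 := hL.card
      rw [Nat.card_eq_fintype_card] at h2
      rw [Finset.card_univ, h2, Finset.card_pair hab] at h1
      omega
    simp only [Finset.mem_insert, Finset.mem_singleton, not_or] at hc
    obtain ⟨g, g1, g2⟩ := hL.two_trans hab (Ne.symm hc.1)
    have h3 : g ∈ MulAction.stabilizer X ({a, b} : Finset Ω) := htop ▸ Subgroup.mem_top g
    rw [MulAction.mem_stabilizer_iff, Finset.smul_finset_insert, Finset.smul_finset_singleton,
      g1, g2] at h3
    have : c ∈ ({a, b} : Finset Ω) := by rw [← h3]; simp
    simp only [Finset.mem_insert, Finset.mem_singleton] at this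
    tauto
  have hex : ∀ β : Pt, ∃ x : X, x • α = β := fun β => MulAction.exists_smul_eq X α β
  choose t ht using hex
  have hiff : ∀ x y : X, x • α = y • α ↔ x • ({a, b} : Finset Ω) = y • ({a, b} : Finset Ω) := by
    intro x y
    rw [← inv_smul_eq_iff, ← inv_smul_eq_iff, ← mul_smul, ← mul_smul,
      ← MulAction.mem_stabilizer_iff, hstab, MulAction.mem_stabilizer_iff]
  have hE : ∀ x : X, t (x • α) • ({a, b} : Finset Ω) = x • ({a, b} : Finset Ω) := by
    intro x
    rw [← hiff, ht]
  refine ⟨fun β => t β • {a, b}, ⟨?_, ?_, ?_, ?_⟩, ?_⟩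
  · intro β
    rw [Finset.card_smul_finset, Finset.card_pair hab]
  · intro x β
    have := hE (x * t β)
    rw [mul_smul, ht, mul_smul] at this
    exact this
  · intro β γ h
    have := (hiff _ _).2 h
    rwa [ht, ht] at this
  · intro s hs
    obtain ⟨c, d, hcd, rfl⟩ := Finset.card_eq_two.1 hs
    obtain ⟨g, g1, g2⟩ := hL.two_trans hab hcd
    refine ⟨g • α, ?_⟩
    simp only [hE]
    rw [Finset.smul_finset_insert, Finset.smul_finset_singleton, g1, g2]
  · intro h3 β
    refine ⟨t β * ρ * (t β)⁻¹, ?_, ?_, ?_⟩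
    · have h4 : (t β)⁻¹ • β = α := by rw [inv_smul_eq_iff, ht]
      rw [mul_smul, h4, mul_smul, MulAction.mem_stabilizer_iff.1 hρ, ht]
    · rw [conj_pow]
      intro h
      apply hρ2 h3
      simpa using h
    · intro w hw
      rw [Finset.mem_smul_finset] at hw
      obtain ⟨y, hy, rfl⟩ := hw
      rw [mul_smul, inv_smul_smul, mul_smul]
      simp only [Finset.mem_insert, Finset.mem_singleton] at hy
      rcases hy with rfl | rfl
      · rw [hρa]
      · rw [hρb]

end Abstract
end FT

/-! ### A conjugation-invariant description of meeting edges -/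

namespace FT
section Meets

/-- A purely group-theoretic relation between points which holds exactly when their edges share a
vertex (`meets_iff`). Being phrased in terms of the group `X` and its action on `Pt` only, it is
preserved by every group that normalizes `X`. -/
def Meets (X : Type*) {Pt : Type*} [Group X] [MulAction X Pt] (p : ℕ) (β γ : Pt) : Prop :=
  ∃ u : X, u ≠ 1 ∧ u ^ p = 1 ∧
    (∃ x : X, x • β = β ∧ x ^ 2 ≠ 1 ∧ Commute (x * u * x⁻¹) u) ∧
    (∃ x : X, x • γ = γ ∧ x ^ 2 ≠ 1 ∧ Commute (x * u * x⁻¹) u)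

/-- The relation `Meets X p` is invariant under any group in which `X` is normal. -/
lemma Meets.conj {G Pt : Type*} [Group G] [MulAction G Pt] {X : Subgroup G} [X.Normal] {p : ℕ}
    {β γ : Pt} (h : Meets X p β γ) (g : G) : Meets X p (g • β) (g • γ) := by
  have hs : ∀ (x : X) (δ : Pt), x • δ = δ → (MulAut.conjNormal g x : X) • (g • δ) = g • δ := by
    intro x δ hx
    rw [Subgroup.smul_def, MulAut.conjNormal_apply, mul_smul, inv_smul_smul, mul_smul]
    rw [Subgroup.smul_def] at hx
    rw [hx]
  have hx : ∀ (u : X) (δ : Pt), (∃ x : X, x • δ = δ ∧ x ^ 2 ≠ 1 ∧ Commute (x * u * x⁻¹) u) →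
      ∃ x : X, x • (g • δ) = g • δ ∧ x ^ 2 ≠ 1 ∧
        Commute (x * (MulAut.conjNormal g u) * x⁻¹) (MulAut.conjNormal g u) := by
    rintro u δ ⟨x, h1, h2, h3⟩
    refine ⟨MulAut.conjNormal g x, hs x δ h1, ?_, ?_⟩
    · rw [← map_pow]; exact fun h => h2 ((MulEquiv.map_eq_one_iff _).1 h)
    · have := h3.map (MulAut.conjNormal g : X ≃* X)
      simpa only [map_mul, map_inv] using this
  obtain ⟨u, h1, h2, h3, h4⟩ := h
  refine ⟨MulAut.conjNormal g u, by simpa using h1, ?_, hx u β h3, hx u γ h4⟩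
  rw [← map_pow, h2, map_one]

variable {X Ω Pt : Type*} [Group X] [MulAction X Ω] [Fintype Ω] [DecidableEq Ω]
  [MulAction X Pt]

/-- A nontrivial element of `p`-power order fixes exactly one point of the line. -/
lemma unique_fixed {q p n : ℕ} (hL : IsLineAction X Ω q p n) (hp : p.Prime) (hpq : p ∣ q)
    (hq : 1 ≤ q) {m : ℕ} {u : X} (hu : u ≠ 1) (hup : u ^ p ^ m = 1) :
    ∃ w : Ω, u • w = w ∧ ∀ w', u • w' = w' → w' = w := by
  have hmod := fixed_modEq (Y := Ω) (m := m) hp (g := u) hup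
  rw [hL.card] at hmod
  obtain ⟨w, hw⟩ : ∃ w : Ω, u • w = w := by
    by_contra! hcon
    have : {w : Ω | u • w = w} = ∅ := by
      ext w; simp [hcon w]
    rw [this] at hmod
    have h1 : p ∣ q + 1 := Nat.modEq_zero_iff_dvd.1 (by simpa using hmod)
    have h2 := (Nat.dvd_add_right hpq).1 h1
    exact hp.one_lt.ne' (Nat.dvd_one.1 h2)
  refine ⟨w, hw, fun w' hw' => ?_⟩
  by_contra hne
  have h1 := hL.fix_two hne hw' hw
  have hcop : Nat.Coprime (p ^ m) (q - 1) := by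
    apply Nat.Coprime.pow_left
    rw [hp.coprime_iff_not_dvd]
    intro h
    have h2 := (Nat.dvd_sub hpq h)
    have : q - (q - 1) = 1 := by omega
    rw [this] at h2
    exact hp.one_lt.ne' (Nat.dvd_one.1 h2)
  apply hu
  have h3 := Nat.dvd_gcd (orderOf_dvd_of_pow_eq_one hup) (orderOf_dvd_of_pow_eq_one h1)
  rw [hcop.gcd_eq_one, Nat.dvd_one, orderOf_eq_one_iff] at h3
  exact h3

/-- If `u` has the single fixed point `w` and commutes with `x u x⁻¹`, then `x` fixes `w`; when also `x`
fixes `β` and `w` is not an end of `E β`, then `x ^ 2` fixes three points and is trivial. -/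
lemma meets_iff {q p n : ℕ} (hL : IsLineAction X Ω q p n) (hp : p.Prime) (hpq : p ∣ q)
    (hq : 1 ≤ q) {E : Pt → Finset Ω} (hE : IsEdgeMap X E)
    (hx : ∀ β, ∃ x : X, x • β = β ∧ x ^ 2 ≠ 1 ∧ ∀ w ∈ E β, x • w = w) (β γ : Pt) :
    Meets X p β γ ↔ ∃ w, w ∈ E β ∧ w ∈ E γ := by
  constructor
  · rintro ⟨u, hu, hup, h1, h2⟩
    obtain ⟨w, hw, huniq⟩ := unique_fixed hL hp hpq hq hu (m := 1) (by simpa using hup)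
    have key : ∀ δ : Pt, (∃ x : X, x • δ = δ ∧ x ^ 2 ≠ 1 ∧ Commute (x * u * x⁻¹) u) →
        w ∈ E δ := by
      rintro δ ⟨x, hxδ, hx2, hc⟩
      have h3 : (x * u * x⁻¹) • w = w := by
        apply huniq
        rw [← mul_smul, ← hc.eq, mul_smul, hw]
      have h4 : x⁻¹ • w = w := by
        apply huniq
        rw [mul_assoc, mul_smul, mul_smul] at h3
        exact eq_inv_smul_iff.2 h3
      have h5 : x • w = w := by rw [inv_smul_eq_iff] at h4; exact h4.symm
      by_contra hwδ
      obtain ⟨a, b, hab, hEδ⟩ := Finset.card_eq_two.1 (hE.card_two δ)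
      have h6 := hE.smul x δ
      rw [hxδ, hEδ, Finset.smul_finset_insert, Finset.smul_finset_singleton] at h6
      have h7 : (x • a = a ∨ x • a = b) ∧ (x • b = a ∨ x • b = b) := by
        have ha : x • a ∈ ({a, b} : Finset Ω) := by rw [h6]; simp
        have hb : x • b ∈ ({a, b} : Finset Ω) := by rw [h6]; simp
        exact ⟨by simpa using ha, by simpa using hb⟩
      have h8 : x • a ≠ x • b := by simpa using hab
      have h9 : (x ^ 2) • a = a ∧ (x ^ 2) • b = b := by
        rw [pow_two, mul_smul, mul_smul]
        rcases h7 with ⟨e1 | e1, e2 | e2⟩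
        · rw [e1, e2] at h8; exact absurd rfl h8
        · simp [e1, e2]
        · simp [e1, e2]
        · rw [e1, e2] at h8; exact absurd rfl h8
      rw [hEδ] at hwδ
      simp only [Finset.mem_insert, Finset.mem_singleton, not_or] at hwδ
      exact hx2 (hL.fix_three hab hwδ.1 hwδ.2 h9.1 h9.2 (by rw [pow_two, mul_smul, h5, h5]))
    exact ⟨w, key β h1, key γ h2⟩
  · rintro ⟨w, h1, h2⟩
    obtain ⟨u, hu, hup, -, hc⟩ := hL.unipotent w
    obtain ⟨x, x1, x2, x3⟩ := hx β
    obtain ⟨y, y1, y2, y3⟩ := hx γ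
    exact ⟨u, hu, hup, ⟨x, x1, x2, hc x (x3 w h1)⟩, ⟨y, y1, y2, hc y (y3 w h2)⟩⟩

end Meets
end FT

/-! ### Arithmetic of the parameters, and transport along an isomorphism -/

namespace FT
section Arith

/-- The parameter restrictions for `q = 2m + 1`, with `r = 3s`. -/
lemma arith_odd {m s k b : ℕ} (hk : 2 < k) (hsk : s * (k - 1) = m * (2 * m + 3))
    (hs : s ∣ 4 * m) (hks : k < 3 * s) (hb : b * k = (2 * m + 1) * (m + 1) * (3 * s)) :
    m = 7 ∨ m = 16 := by
  have hsm : s ∣ m := by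
    have h1 : s ∣ Nat.gcd (m * 4) (m * (2 * m + 3)) :=
      Nat.dvd_gcd (by rwa [mul_comm]) (Dvd.intro _ hsk)
    have h2 : Nat.Coprime 4 (2 * m + 3) := by
      have : Nat.Coprime 2 (2 * m + 3) := by
        rw [Nat.coprime_two_left]; exact ⟨m + 1, by ring⟩
      exact this.pow_left 2
    rwa [Nat.gcd_mul_left, h2.gcd_eq_one, mul_one] at h1
  obtain ⟨c, rfl⟩ := hsm
  have hs0 : 0 < s := by omega
  have hk1 : k - 1 = c * (2 * (s * c) + 3) := by
    apply Nat.eq_of_mul_eq_mul_left hs0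
    rw [hsk]; ring
  have hc : c = 1 := by
    rcases Nat.lt_trichotomy c 1 with h | h | h
    · obtain rfl : c = 0 := by omega
      simp at hk1; omega
    · exact h
    · have : 2 * (2 * (s * c) + 3) ≤ k - 1 := by rw [hk1]; exact Nat.mul_le_mul_right _ h
      have : s * 2 ≤ s * c := Nat.mul_le_mul_left _ h
      omega
  subst hc
  simp only [mul_one, one_mul] at *
  obtain rfl : k = 2 * s + 4 := by omega
  have hdvd : s + 2 ∣ 18 := by
    have h1 : s + 2 ∣ (2 * s + 1) * (s + 1) * (3 * s) := ⟨b * 2, by rw [← hb]; ring⟩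
    have h2 : s + 2 ∣ (2 * s + 1) * (s + 1) * (3 * s) + 18 := by
      zify
      exact ⟨6 * s ^ 2 - 3 * s + 9, by ring⟩
    exact (Nat.dvd_add_right h1).1 h2
  have := Nat.le_of_dvd (by norm_num) hdvd
  have : s ≤ 16 := by omega
  interval_cases s <;> omega

/-- The parameter restrictions for `q = 2m` with `m` even, and `r = 3s`. -/
lemma arith_even {m s k : ℕ} (hm : 2 ≤ m) (hm2 : 2 ∣ m)
    (hsk : s * (k - 1) = (2 * m - 1) * (m + 1))
    (hs : s ∣ 2 * (2 * m - 1)) (hks : k < 3 * s) : s = 2 * m - 1 ∧ k = m + 2 := by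
  have hodd : Odd ((2 * m - 1) * (m + 1)) := by
    rw [Nat.odd_mul]
    exact ⟨by rw [Nat.odd_iff]; omega, by rw [Nat.odd_iff]; omega⟩
  rw [← hsk, Nat.odd_mul] at hodd
  have hs' : s ∣ 2 * m - 1 := (Nat.Coprime.symm (Nat.coprime_two_left.2 hodd.1)).dvd_of_dvd_mul_left hs
  obtain ⟨c, hc⟩ := hs'
  have hs0 : 0 < s := by omega
  have hk1 : k - 1 = c * (m + 1) := by
    apply Nat.eq_of_mul_eq_mul_left hs0
    rw [hsk, hc]; ring
  have hcodd : Odd c := by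
    have : Odd (2 * m - 1) := by rw [Nat.odd_iff]; omega
    rw [hc, Nat.odd_mul] at this
    exact this.2
  have hc1 : c = 1 := by
    by_contra hne
    have h3 : 3 ≤ c := by obtain ⟨t, ht⟩ := hcodd; omega
    have h4 : 3 * (m + 1) ≤ k - 1 := by rw [hk1]; exact Nat.mul_le_mul_right _ h3
    have h5 : s * 3 ≤ s * c := Nat.mul_le_mul_left _ h3
    omega
  subst hc1
  omega

/-- The parameter restrictions for `q = 5`, where `v = 15` and `r = 3s`. -/
lemma arith_five {s k : ℕ} (hk : 2 < k) (hk' : k < 14) (hsk : s * (k - 1) = 14)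
    (hks : k < 3 * s) : s = 7 ∧ k = 3 := by
  interval_cases k <;> omega

lemma not_isPrimePow_of {q : ℕ} (h : q = 15 ∨ q = 33) : ¬ IsPrimePow q := by
  rw [isPrimePow_nat_iff]
  rintro ⟨p, e, hp, -, rfl⟩
  have h3 : 3 ∣ p ^ e := by omega
  have e3 := (Nat.prime_dvd_prime_iff_eq Nat.prime_three hp).1 (Nat.prime_three.dvd_of_dvd_pow h3)
  subst e3
  rcases h with h | h
  · have h5 : 5 ∣ 3 ^ e := by omega
    have := Nat.prime_five.dvd_of_dvd_pow h5
    omega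
  · have h5 : 11 ∣ 3 ^ e := by omega
    have := (show Nat.Prime 11 by norm_num).dvd_of_dvd_pow h5
    omega

/-- For a non-symmetric design Fisher's inequality is strict, so `b k = v r` gives `k < r`. -/
lemma k_lt_r {Pt : Type*} [Fintype Pt] {𝓑 : Set (Set Pt)} {k r : ℕ} (hD : IsDesign 𝓑 k 3)
    (hr : ∀ x : Pt, repNum 𝓑 x = r) (hk : 2 < k) (hkv : k < Nat.card Pt - 1)
    (hns : Nat.card 𝓑 ≠ Nat.card Pt) (α : Pt) : k < r := by
  have h1 := design_r_eq hD hr α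
  have h2 := design_bk_eq hD hr
  have h3 : 3 < r := by
    by_contra! h
    have := Nat.mul_le_mul_right (k - 1) h
    omega
  have h4 := lt_of_le_of_ne (fisher hD hr h3) (Ne.symm hns)
  by_contra! h
  have h5 : Nat.card Pt * r ≤ Nat.card Pt * k := Nat.mul_le_mul_left _ h
  have h6 : Nat.card Pt * k < Nat.card 𝓑 * k := Nat.mul_lt_mul_of_pos_right h4 (by omega)
  omega

end Arith

section Transport

/-- A group isomorphic to `PSL(2,F)` acts on the projective line as `PSL(2,F)` does. -/
lemma isLineAction_of_iso {F : Type} [Field F] [Fintype F] {X : Type*} [Group X]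
    (e : X ≃* PSL2 F) [MulAction X (PLine F)] (he : ∀ (x : X) (w : PLine F), x • w = e x • w)
    (p : ℕ) [CharP F p] :
    IsLineAction X (PLine F) (Fintype.card F) p
      ((Fintype.card F - 1) / Nat.gcd 2 (Fintype.card F - 1)) where
  card := card_pline
  two_trans := by
    intro a b c d hab hcd
    obtain ⟨g, h1, h2⟩ := psl_two_trans hab hcd
    exact ⟨e.symm g, by simp [he, h1], by simp [he, h2]⟩
  fix_two := by
    intro a b g hab h1 h2
    rw [he] at h1 h2
    apply e.injective
    rw [map_pow, map_one, psl_fix_two hab h1 h2]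
  fix_three := by
    intro a b c g hab hac hbc h1 h2 h3
    rw [he] at h1 h2 h3
    apply e.injective
    rw [map_one, psl_fix_three hab hac hbc h1 h2 h3]
  unipotent := by
    intro w
    obtain ⟨u, h1, h2, h3, h4⟩ := psl_exists_unipotent (p := p) w
    refine ⟨e.symm u, by simpa using h1, by rw [← map_pow, h2, map_one], by simp [he, h3], ?_⟩
    intro x hx
    rw [he] at hx
    have := (h4 (e x) hx).map e.symm
    simpa using this
  fixed := by
    intro g hg
    obtain ⟨w, hw⟩ := psl_exists_fixed (g := e g) (by rw [← map_pow, hg, map_one])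
    exact ⟨w, by rw [he, hw]⟩

end Transport
end FT

/-! ### Blocks fixed by 2-subgroups -/

namespace FT
section Fixing

variable {Pt : Type*} [Fintype Pt] {𝓑 : Set (Set Pt)}

/-- A 2-group fixing a point `α` on an odd number of blocks fixes one of these blocks. -/
lemma exists_fixed_block {X : Type*} [Group X] [MulAction X Pt] (hacts : ActsOn X 𝓑)
    {α : Pt} (P : Subgroup X) (hP : IsPGroup 2 P) (hPα : ∀ x ∈ P, x • α = α)
    (hodd : Odd (repNum 𝓑 α)) : ∃ B ∈ 𝓑, α ∈ B ∧ ∀ x ∈ P, x • B = B := by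
  let Y : Type _ := {B : Set Pt | B ∈ 𝓑 ∧ α ∈ B}
  have hmem : ∀ (x : P) (B : Y), (x : X) • B.1 ∈ {B : Set Pt | B ∈ 𝓑 ∧ α ∈ B} := by
    intro x B
    refine ⟨hacts x _ B.2.1, ?_⟩
    have h1 : (x : X) • α ∈ (x : X) • B.1 := Set.smul_mem_smul_set B.2.2
    rwa [hPα x x.2] at h1
  let _ : MulAction P Y :=
    { smul := fun x B => ⟨(x : X) • B.1, hmem x B⟩
      one_smul := fun B => Subtype.ext (one_smul X B.1)
      mul_smul := fun x y B => Subtype.ext (mul_smul (x : X) (y : X) B.1) }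
  have hY : ¬ 2 ∣ Nat.card Y := by
    rw [← even_iff_two_dvd, Nat.not_even_iff_odd]
    exact hodd
  have : Fact (Nat.Prime 2) := ⟨Nat.prime_two⟩
  have : Finite Y := inferInstanceAs (Finite {B : Set Pt | B ∈ 𝓑 ∧ α ∈ B})
  obtain ⟨B, hB⟩ := hP.nonempty_fixed_point_of_prime_not_dvd_card Y hY
  refine ⟨B.1, B.2.1, B.2.2, fun x hx => ?_⟩
  exact congrArg Subtype.val (hB ⟨x, hx⟩)

/-- If `X_α` fixes a block `B` through `α`, then by flag-transitivity `X_β` fixes `B` for each `β ∈ B`,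
and maximality forces `X_α = X_B = X_β`. An element of `X` moving `α` to such a `β` then normalizes
`X_α`, so `X_α` is normal in `X` and hence acts trivially. -/
lemma no_stabilized_block {G : Type*} [Group G] [MulAction G Pt] [FaithfulSMul G Pt]
    (hflag : FlagTransitive G 𝓑) (X : Subgroup G) [X.Normal] [Finite X]
    [MulAction.IsPretransitive X Pt] {α : Pt} (hmax : IsCoatom (MulAction.stabilizer X α))
    (hne : MulAction.stabilizer X α ≠ ⊥) {B : Set Pt} (hB : B ∈ 𝓑) (hαB : α ∈ B)
    (hB2 : 1 < B.ncard) (hBv : B ≠ Set.univ)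
    (hfix : ∀ x : X, x • α = α → x • B = B) : False := by
  have hfix' : ∀ β ∈ B, ∀ x : X, x • β = β → x • B = B := by
    intro β hβ x hx
    obtain ⟨g, h1, h2⟩ := hflag B hB B hB α hαB β hβ
    have h3 := hfix (MulAut.conjNormal g⁻¹ x) (by
      rw [Subgroup.smul_def, MulAut.conjNormal_apply, inv_inv, mul_smul, mul_smul, h2,
        ← Subgroup.smul_def, hx, inv_smul_eq_iff, h2])
    rw [Subgroup.smul_def, MulAut.conjNormal_apply, inv_inv, mul_smul, mul_smul, h1,
      ← Subgroup.smul_def, inv_smul_eq_iff, h1] at h3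
    exact h3
  have hle : ∀ β ∈ B, MulAction.stabilizer X β ≤ MulAction.stabilizer X B :=
    fun β hβ x hx => hfix' β hβ x hx
  have hBα : MulAction.stabilizer X α = MulAction.stabilizer X B := by
    by_contra hcon
    have htop := hmax.2 _ (lt_of_le_of_ne (hle α hαB) hcon)
    apply hBv
    rw [Set.eq_univ_iff_forall]
    intro γ
    obtain ⟨x, rfl⟩ := MulAction.exists_smul_eq X α γ
    have hx : x ∈ MulAction.stabilizer X B := htop ▸ Subgroup.mem_top x
    rw [← MulAction.mem_stabilizer_iff.1 hx]
    exact Set.smul_mem_smul_set hαB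
  obtain ⟨β, hβ, hβα⟩ : ∃ β ∈ B, β ≠ α := by
    by_contra! hcon
    have : B ⊆ {α} := hcon
    have := Set.ncard_le_ncard this
    rw [Set.ncard_singleton] at this
    omega
  have hsub : MulAction.stabilizer X β ≤ MulAction.stabilizer X α := hBα ▸ hle β hβ
  obtain ⟨g, hg⟩ := MulAction.exists_smul_eq X α β
  have hconj : ∀ x : X, x • α = α → (g * x * g⁻¹) • α = α := by
    intro x hx
    apply hsub
    rw [MulAction.mem_stabilizer_iff, ← hg, mul_smul, inv_smul_smul, mul_smul, hx]
  have hnormg : g ∈ Subgroup.normalizer (MulAction.stabilizer X α : Set X) := by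
    have hmap : (MulAction.stabilizer X α).map (MulAut.conj g).toMonoidHom =
        MulAction.stabilizer X α := by
      apply Subgroup.eq_of_le_of_card_ge
      · rintro _ ⟨x, hx, rfl⟩
        exact hconj x hx
      · rw [Subgroup.card_map_of_injective (MulAut.conj g).injective]
    rw [Subgroup.mem_normalizer_iff]
    intro x
    refine ⟨hconj x, fun hx => ?_⟩
    rw [← hmap] at hx
    obtain ⟨y, hy, hyx⟩ := hx
    have : y = x := by simpa using hyx
    exact this ▸ hy
  have hnorm : Subgroup.normalizer (MulAction.stabilizer X α : Set X) = ⊤ := by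
    apply hmax.2
    refine lt_of_le_of_ne Subgroup.le_normalizer ?_
    intro h
    rw [← h] at hnormg
    exact hβα (hg.symm.trans hnormg)
  apply hne
  rw [Subgroup.normalizer_eq_top_iff] at hnorm
  rw [Subgroup.eq_bot_iff_forall]
  intro x hx
  apply Subtype.ext
  apply FaithfulSMul.eq_of_smul_eq_smul (α := Pt)
  intro γ
  obtain ⟨y, rfl⟩ := MulAction.exists_smul_eq X α γ
  have h1 := hnorm.conj_mem x hx y⁻¹
  rw [inv_inv, MulAction.mem_stabilizer_iff, mul_smul, mul_smul, inv_smul_eq_iff] at h1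
  rw [← Subgroup.smul_def, h1]
  simp

/-- When `r` is odd and `X_α` has even order, an involution of `X_α` fixes a block through `α`; by
flag-transitivity each flag is fixed by an involution of `X`. -/
lemma exists_flip {G : Type*} [Group G] [MulAction G Pt] (hacts : ActsOn G 𝓑)
    (hflag : FlagTransitive G 𝓑) (X : Subgroup G) [X.Normal] [Finite X] {α : Pt}
    (heven : 2 ∣ Nat.card (MulAction.stabilizer X α)) (hodd : Odd (repNum 𝓑 α))
    {C : Set Pt} (hC : C ∈ 𝓑) {β : Pt} (hβ : β ∈ C) :
    ∃ τ : X, τ ≠ 1 ∧ τ ^ 2 = 1 ∧ τ • β = β ∧ τ • C = C := by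
  have : Fact (Nat.Prime 2) := ⟨Nat.prime_two⟩
  obtain ⟨τ, hτ⟩ := exists_prime_orderOf_dvd_card' 2 heven
  have hτX : orderOf (τ : X) = 2 := by rw [Subgroup.orderOf_coe, hτ]
  obtain ⟨B, hB, hαB, hfix⟩ := exists_fixed_block (X := X) (fun x B hB => hacts x B hB)
    (α := α) (Subgroup.zpowers (τ : X))
    (IsPGroup.of_card (n := 1) (by rw [Nat.card_zpowers, hτX, pow_one]))
    (by
      intro x hx
      have : Subgroup.zpowers (τ : X) ≤ MulAction.stabilizer X α := by
        rw [Subgroup.zpowers_le]; exact τ.2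
      exact this hx) hodd
  obtain ⟨g, h1, h2⟩ := hflag B hB C hC α hαB β hβ
  have hB' := hfix τ (Subgroup.mem_zpowers _)
  have hα' : (τ : X) • α = α := τ.2
  rw [Subgroup.smul_def] at hB' hα'
  refine ⟨MulAut.conjNormal g (τ : X), ?_, ?_, ?_, ?_⟩
  · intro h
    rw [MulEquiv.map_eq_one_iff] at h
    rw [h, orderOf_one] at hτX
    omega
  · rw [← map_pow, ← hτX, pow_orderOf_eq_one, map_one]
  · rw [Subgroup.smul_def, MulAut.conjNormal_apply, ← h2, mul_smul, inv_smul_smul, mul_smul, hα']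
  · rw [Subgroup.smul_def, MulAut.conjNormal_apply, ← h1, mul_smul, inv_smul_smul, mul_smul, hB']

end Fixing
end FT

/-! ### Even q: blocks as 2-regular graphs -/

namespace FT
section Even

variable {X Ω Pt : Type*} [Group X] [MulAction X Ω] [DecidableEq Ω] [MulAction X Pt] [Fintype Pt]

/-- An involution fixing the flag `(β, C)` swaps the two ends of the edge `E β`, so both have the same
degree in the graph formed by the edges of `C`. As `E β` meets exactly two other edges of `C`, this
degree is 2. -/
lemma degree_eq_two {q p n : ℕ} (hL : IsLineAction X Ω q p n) (hq : Odd (q - 1))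
    {E : Pt → Finset Ω} (hE : IsEdgeMap X E) {C : Set Pt} {β : Pt} (hβ : β ∈ C)
    (hΓ : (C ∩ {γ | γ ≠ β ∧ ∃ w, w ∈ E β ∧ w ∈ E γ}).ncard = 2)
    {τ : X} (hτ1 : τ ≠ 1) (hτ2 : τ ^ 2 = 1) (hτβ : τ • β = β) (hτC : τ • C = C)
    {w : Ω} (hw : w ∈ E β) : {γ | γ ∈ C ∧ w ∈ E γ}.ncard = 2 := by
  obtain ⟨a, b, hab, hEβ⟩ := Finset.card_eq_two.1 (hE.card_two β)
  have h6 := hE.smul τ β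
  rw [hτβ, hEβ, Finset.smul_finset_insert, Finset.smul_finset_singleton] at h6
  have hswap : τ • a = b := by
    have ha : τ • a ∈ ({a, b} : Finset Ω) := by rw [h6]; simp
    have hb : τ • b ∈ ({a, b} : Finset Ω) := by rw [h6]; simp
    simp only [Finset.mem_insert, Finset.mem_singleton] at ha hb
    rcases ha with ha | ha
    · have hb' : τ • b = b := by
        rcases hb with hb | hb
        · exact absurd (smul_left_cancel τ (hb.trans ha.symm)) hab.symm
        · exact hb
      exfalso
      apply hτ1
      have h1 := hL.fix_two hab ha hb'
      have h3 := Nat.dvd_gcd (orderOf_dvd_of_pow_eq_one hτ2) (orderOf_dvd_of_pow_eq_one h1)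
      rwa [(Nat.coprime_two_left.2 hq).gcd_eq_one, Nat.dvd_one, orderOf_eq_one_iff] at h3
    · exact ha
  set S : Ω → Set Pt := fun w => {γ | γ ∈ C ∧ w ∈ E γ} with hS
  have hSab : τ • S a = S b := by
    ext γ
    rw [Set.mem_smul_set_iff_inv_smul_mem]
    simp only [hS, Set.mem_ofPred_eq]
    rw [hE.smul, Finset.mem_inv_smul_finset_iff, hswap,
      ← Set.mem_smul_set_iff_inv_smul_mem, hτC]
  have hcard : (S b).ncard = (S a).ncard := by
    rw [← hSab]
    exact Set.ncard_image_of_injective _ (MulAction.injective τ)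
  have hinter : S a ∩ S b = {β} := by
    ext γ
    simp only [hS, Set.mem_inter_iff, Set.mem_ofPred_eq, Set.mem_singleton_iff]
    constructor
    · rintro ⟨⟨-, h1⟩, -, h2⟩
      apply hE.inj
      symm
      apply Finset.eq_of_subset_of_card_le
      · rw [hEβ]; intro w hw
        simp only [Finset.mem_insert, Finset.mem_singleton] at hw
        rcases hw with rfl | rfl <;> assumption
      · rw [hE.card_two, hE.card_two]
    · rintro rfl
      rw [hEβ]
      simp [hβ]
  have hunion : S a ∪ S b = insert β (C ∩ {γ | γ ≠ β ∧ ∃ w, w ∈ E β ∧ w ∈ E γ}) := by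
    ext γ
    simp only [hS, Set.mem_union, Set.mem_ofPred_eq, Set.mem_insert_iff, Set.mem_inter_iff, hEβ,
      Finset.mem_insert, Finset.mem_singleton]
    constructor
    · intro h
      by_cases hγ : γ = β
      · exact .inl hγ
      · right
        rcases h with ⟨h1, h2⟩ | ⟨h1, h2⟩
        · exact ⟨h1, hγ, a, .inl rfl, h2⟩
        · exact ⟨h1, hγ, b, .inr rfl, h2⟩
    · rintro (rfl | ⟨h1, -, w, rfl | rfl, h2⟩)
      · left; rw [hEβ]; simp [hβ]
      · exact .inl ⟨h1, h2⟩
      · exact .inr ⟨h1, h2⟩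
  have hsum := Set.ncard_union_add_ncard_inter (S a) (S b)
  rw [hinter, hunion, Set.ncard_insert_of_notMem (by simp), hΓ, Set.ncard_singleton] at hsum
  rw [hEβ] at hw
  simp only [Finset.mem_insert, Finset.mem_singleton] at hw
  rcases hw with rfl | rfl
  · change (S w).ncard = 2
    omega
  · change (S w).ncard = 2
    omega

/-- A finite 2-regular graph has as many vertices as edges. -/
lemma card_support [Fintype Ω] {E : Pt → Finset Ω} (h2 : ∀ β, (E β).card = 2) {C : Set Pt}
    (hdeg : ∀ β ∈ C, ∀ w ∈ E β, {γ | γ ∈ C ∧ w ∈ E γ}.ncard = 2) :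
    {w | ∃ β ∈ C, w ∈ E β}.ncard = C.ncard := by
  classical
  have h := Finset.card_mul_eq_card_mul (s := C.toFinset)
    (t := {w | ∃ β ∈ C, w ∈ E β}.toFinset) (fun β w => w ∈ E β) (m := 2) (n := 2)
    (by
      intro β hβ
      rw [← h2 β]
      congr 1
      ext w
      simp only [Finset.bipartiteAbove, Finset.mem_filter, Set.mem_toFinset, Set.mem_ofPred_eq]
      exact ⟨fun h => h.2, fun h => ⟨⟨β, by simpa using hβ, h⟩, h⟩⟩)
    (by
      intro w hw
      obtain ⟨β, hβ, hwβ⟩ : ∃ β ∈ C, w ∈ E β := by simpa using hw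
      rw [← hdeg β hβ w hwβ, ← Set.ncard_coe_finset]
      congr 1
      ext γ
      simp [Finset.bipartiteBelow])
  rw [Set.ncard_eq_toFinset_card', Set.ncard_eq_toFinset_card']
  omega

/-- If no block stabilizer had order divisible by 4, then `2 ^ f` would divide the length of each
orbit on blocks. -/
lemma exists_four_dvd_stabilizer [Finite X] {𝓑 : Set (Set Pt)} (hacts : ActsOn X 𝓑) {f : ℕ}
    (hX : 2 ^ (f + 1) ∣ Nat.card X) (hb : ¬ 2 ^ f ∣ Nat.card 𝓑) :
    ∃ B ∈ 𝓑, 4 ∣ Nat.card (MulAction.stabilizer X B) := by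
  by_contra! hcon
  apply hb
  let _ : MulAction X 𝓑 :=
    { smul := fun x B => ⟨x • B.1, hacts x _ B.2⟩
      one_smul := fun B => Subtype.ext (one_smul X B.1)
      mul_smul := fun x y B => Subtype.ext (mul_smul x y B.1) }
  have : Fintype (Quotient (MulAction.orbitRel X 𝓑)) := Fintype.ofFinite _
  rw [Nat.card_congr (MulAction.selfEquivSigmaOrbits X 𝓑), Nat.card_sigma]
  apply Finset.dvd_sum
  intro ω _
  generalize ω.out = B
  have h1 := (MulAction.stabilizer X B).index_mul_card
  rw [MulAction.index_stabilizer, ← Nat.card_coe_set_eq] at h1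
  have hst : MulAction.stabilizer X B = MulAction.stabilizer X B.1 := by
    ext x
    rw [MulAction.mem_stabilizer_iff, MulAction.mem_stabilizer_iff, Subtype.ext_iff]
    rfl
  have h4 := hcon B.1 B.2
  rw [← hst] at h4
  rw [← h1] at hX
  have hodd : ∀ {c : ℕ}, ¬ 2 ∣ c → ∀ i : ℕ, Nat.Coprime (2 ^ i) c := fun h i =>
    Nat.Coprime.pow_left i ((Nat.Prime.coprime_iff_not_dvd Nat.prime_two).2 h)
  by_cases h2 : 2 ∣ Nat.card (MulAction.stabilizer X B)
  · obtain ⟨c, hc⟩ := h2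
    rw [hc] at hX h4
    have hc2 : ¬ 2 ∣ c := by omega
    rw [mul_left_comm, pow_succ'] at hX
    exact (hodd hc2 f).dvd_of_dvd_mul_right (Nat.dvd_of_mul_dvd_mul_left (by norm_num) hX)
  · exact (pow_dvd_pow 2 (Nat.le_succ f)).trans ((hodd h2 _).dvd_of_dvd_mul_right hX)

/-- A subgroup of order 4 fixing `B` acts semiregularly on the vertex set of `B`: a nontrivial element
fixes at most one point of the line, and it fixes an even number of vertices of `B`. -/
lemma four_dvd_support [Fintype Ω] [Finite X] {q n : ℕ} (hL : IsLineAction X Ω q 2 n) (h2q : 2 ∣ q)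
    (hq : 1 ≤ q) {E : Pt → Finset Ω} (hE : IsEdgeMap X E) {B : Set Pt}
    (h4 : 4 ∣ Nat.card (MulAction.stabilizer X B))
    (heven : 2 ∣ {w | ∃ β ∈ B, w ∈ E β}.ncard) : 4 ∣ {w | ∃ β ∈ B, w ∈ E β}.ncard := by
  classical
  have : Fact (Nat.Prime 2) := ⟨Nat.prime_two⟩
  obtain ⟨W, hW⟩ := Sylow.exists_subgroup_card_pow_prime (G := MulAction.stabilizer X B) 2 (n := 2)
    (by simpa using h4)
  set V : Set Ω := {w | ∃ β ∈ B, w ∈ E β} with hV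
  have hmem : ∀ (g : W) (w : V), (g : X) • w.1 ∈ V := by
    rintro g ⟨w, β, hβ, hw⟩
    refine ⟨(g : X) • β, ?_, ?_⟩
    · have h1 : (g : X) • β ∈ (g : X) • B := Set.smul_mem_smul_set hβ
      rwa [MulAction.mem_stabilizer_iff.1 g.1.2] at h1
    · rw [hE.smul]
      exact Finset.smul_mem_smul_finset hw
  let _ : MulAction W V :=
    { smul := fun x w => ⟨(x : X) • w.1, hmem x w⟩
      one_smul := fun w => Subtype.ext (one_smul X w.1)
      mul_smul := fun x y w => Subtype.ext (mul_smul (x : X) (y : X) w.1) }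
  have hfix : ∀ g : W, g ≠ 1 → Nat.card (MulAction.fixedBy V g) = 0 := by
    intro g hg
    have hg4 : g ^ 2 ^ 2 = 1 := by rw [← hW]; exact pow_card_eq_one'
    have hgX : (g : X) ≠ 1 := by
      intro h; apply hg; apply Subtype.ext; apply Subtype.ext; exact h
    have hgX4 : (g : X) ^ 2 ^ 2 = 1 := by
      have := congrArg (fun y : W => ((y : MulAction.stabilizer X B) : X)) hg4
      simpa using this
    obtain ⟨w, -, huniq⟩ := unique_fixed hL Nat.prime_two h2q hq hgX hgX4
    have hmod : Nat.card V ≡ Nat.card (MulAction.fixedBy V g) [MOD 2] :=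
      fixed_modEq (Y := V) Nat.prime_two hg4
    have hle : Nat.card (MulAction.fixedBy V g) ≤ 1 := by
      rw [Finite.card_le_one_iff_subsingleton]
      constructor
      rintro ⟨x, hx⟩ ⟨y, hy⟩
      apply Subtype.ext
      apply Subtype.ext
      exact (huniq x.1 (congrArg Subtype.val hx)).trans (huniq y.1 (congrArg Subtype.val hy)).symm
    have h0 : 2 ∣ Nat.card V := by rwa [Nat.card_coe_set_eq]
    have h1 : 2 ∣ Nat.card (MulAction.fixedBy V g) := (hmod.dvd_iff dvd_rfl).1 h0
    omega
  have : Fintype W := Fintype.ofFinite _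
  have : Fintype (Quotient (MulAction.orbitRel W V)) := Fintype.ofFinite _
  have hburn := MulAction.sum_card_fixedBy_eq_card_orbits_mul_card_group W V
  rw [Finset.sum_eq_single 1 (fun g _ hg => by rw [← Nat.card_eq_fintype_card]; exact hfix g hg)
    (by simp), ← Nat.card_eq_fintype_card (α := W), hW, ← Nat.card_eq_fintype_card] at hburn
  have h1 : Nat.card (MulAction.fixedBy V (1 : W)) = V.ncard := by
    rw [← Nat.card_coe_set_eq V, MulAction.fixedBy_one_eq_univ]
    exact Nat.card_univ
  rw [h1] at hburn
  rw [hburn]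
  exact Dvd.intro_left _ rfl

end Even
end FT

/-! ### The point-block count and the even case -/

namespace FT
section Cases

variable {G Ω Pt : Type*} [Group G] [MulAction G Pt] [Fintype Pt] {X : Subgroup G} [X.Normal]
  [MulAction X Ω] [Fintype Ω] [DecidableEq Ω] {𝓑 : Set (Set Pt)} {k r : ℕ}

/-- Each block through `α` contains the same number of points whose edges meet that of `α`; there are
`2 (q - 1)` such points altogether. -/
lemma card_inter_meet {lam q p n : ℕ} (hL : IsLineAction X Ω q p n) (hp : p.Prime) (hpq : p ∣ q)
    (hq : 1 ≤ q) {E : Pt → Finset Ω} (hE : IsEdgeMap X E)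
    (hx : ∀ β, ∃ x : X, x • β = β ∧ x ^ 2 ≠ 1 ∧ ∀ w ∈ E β, x • w = w)
    (hD : IsDesign 𝓑 k lam) (hr : ∀ x : Pt, repNum 𝓑 x = r) (hflag : FlagTransitive G 𝓑)
    {B : Set Pt} (hB : B ∈ 𝓑) {α : Pt} (hα : α ∈ B) :
    r * (B ∩ {β | β ≠ α ∧ ∃ w, w ∈ E α ∧ w ∈ E β}).ncard = lam * (2 * (q - 1)) := by
  rw [← card_meet hq hL.card hE.card_two hE.inj hE.surj α]
  refine ncard_inter_invariant (G := G) hD hr hflag (by simp) ?_ hB hα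
  intro g hg
  ext β
  rw [Set.mem_smul_set_iff_inv_smul_mem]
  simp only [Set.mem_ofPred_eq, ← meets_iff hL hp hpq hq hE hx]
  have hg' : g⁻¹ • α = α := by rw [inv_smul_eq_iff, hg]
  constructor
  · rintro ⟨h1, h2⟩
    refine ⟨fun h => h1 (by rw [h, hg']), ?_⟩
    have := h2.conj g
    rwa [hg, smul_inv_smul] at this
  · rintro ⟨h1, h2⟩
    refine ⟨fun h => h1 (by rw [inv_smul_eq_iff] at h; rw [h, hg]), ?_⟩
    have := h2.conj g⁻¹
    rwa [hg'] at this

/-- The case `q = 2 ^ (f + 1) ≥ 8`: the edges of each block form a 2-regular graph with `k ≡ 2 [MOD 4]`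
vertices, while some block has a stabilizer containing a subgroup of order 4, which acts
semiregularly on these vertices. -/
lemma even_case [Finite X] [MulAction.IsPretransitive X Pt] {f n : ℕ} (hf : 2 ≤ f)
    (hL : IsLineAction X Ω (2 * 2 ^ f) 2 n) {E : Pt → Finset Ω} (hE : IsEdgeMap X E)
    (hacts : ActsOn G 𝓑) (hflag : FlagTransitive G 𝓑) (hD : IsDesign 𝓑 (2 ^ f + 2) 3)
    (hr : ∀ x : Pt, repNum 𝓑 x = 3 * (2 * 2 ^ f - 1))
    (hv : Nat.card Pt = 2 ^ f * (2 * 2 ^ f + 1)) {α : Pt}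
    (hstab : Nat.card (MulAction.stabilizer X α) = 2 * (2 * 2 ^ f - 1))
    (hΓ : ∀ B ∈ 𝓑, ∀ β ∈ B, (B ∩ {γ | γ ≠ β ∧ ∃ w, w ∈ E β ∧ w ∈ E γ}).ncard = 2) : False := by
  have hm4 : 4 ∣ 2 ^ f := pow_dvd_pow 2 hf
  have hm0 : 0 < 2 ^ f := by positivity
  have hqodd : Odd (2 * 2 ^ f - 1) := by rw [Nat.odd_iff]; omega
  have hrodd : Odd (repNum 𝓑 α) := by
    rw [hr, Nat.odd_mul]; exact ⟨by decide, hqodd⟩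
  have hcardX : 2 ^ (f + 1) ∣ Nat.card X := by
    rw [← (MulAction.stabilizer X α).index_mul_card,
      MulAction.index_stabilizer_of_transitive, hv, hstab]
    exact ⟨(2 * 2 ^ f + 1) * (2 * 2 ^ f - 1), by ring⟩
  have hb : ¬ 2 ^ f ∣ Nat.card 𝓑 := by
    rintro ⟨c, hc⟩
    have h1 := design_bk_eq hD hr
    rw [hc, hv, mul_assoc, mul_assoc] at h1
    have h2 := Nat.eq_of_mul_eq_mul_left hm0 h1
    have h3 : Odd ((2 * 2 ^ f + 1) * (3 * (2 * 2 ^ f - 1))) := by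
      rw [Nat.odd_mul, Nat.odd_mul]
      exact ⟨⟨2 ^ f, rfl⟩, by decide, hqodd⟩
    rw [← h2, Nat.odd_mul, Nat.odd_iff, Nat.odd_iff] at h3
    omega
  obtain ⟨B, hB, h4⟩ := exists_four_dvd_stabilizer (X := X)
    (fun x B hB => hacts x B hB) hcardX hb
  have hcard : {w | ∃ β ∈ B, w ∈ E β}.ncard = 2 ^ f + 2 := by
    rw [card_support hE.card_two, ← Nat.card_coe_set_eq, hD.block_card B hB]
    intro β hβ w hw
    obtain ⟨τ, h1, h2, h3, h5⟩ := exists_flip hacts hflag X (α := α)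
      (hstab ▸ Dvd.intro _ rfl) hrodd hB hβ
    exact degree_eq_two hL hqodd hE hβ (hΓ B hB β hβ) h1 h2 h3 h5 hw
  have h5 := four_dvd_support hL (Dvd.intro _ rfl) (by omega) hE h4 (by rw [hcard]; omega)
  rw [hcard] at h5
  omega

end Cases
end FT

/-- In the setting of a non-trivial, non-symmetric flag-transitive,
point-primitive `2-(v,k,3)` design with `3 ∣ r`, almost simple automorphism group `G` with
socle `X ≅ PSL(2,q)` acting point-primitively with maximal point stabilizer `X_α`:
the stabilizer `X_α` is not a dihedral group of order `2(q−1)/gcd(2,q−1)` (the normalizer of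
a maximal split torus); that is, the case `v = q(q+1)/2` does not occur.
(Recall `DihedralGroup n` has order `2n`.) -/
theorem stmt_15
    (q : ℕ) (hq4 : 4 ≤ q)
    (F : Type) [Field F] [Fintype F] (hF : Fintype.card F = q)
    {Pt : Type*} [Fintype Pt] {G : Type*} [Group G] [MulAction G Pt] [FaithfulSMul G Pt]
    -- `D = (Pt, 𝓑)` is a non-trivial, non-symmetric `2-(v,k,3)` design …
    (𝓑 : Set (Set Pt)) (v k : ℕ) (hv : Nat.card Pt = v)
    (hD : IsDesign 𝓑 k 3) (hnt : 2 < k ∧ k < v - 1)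
    (hnonsym : Nat.card 𝓑 ≠ v)
    -- … whose replication number `r` is divisible by 3, …
    (r : ℕ) (hr : ∀ x : Pt, repNum 𝓑 x = r) (h3r : 3 ∣ r)
    -- … admitting the flag-transitive, point-primitive automorphism group `G`, …
    (hacts : ActsOn G 𝓑) (hflag : FlagTransitive G 𝓑)
    (hprim : PointPrimitive G Pt)
    -- … where `G` is almost simple with socle `X ≅ PSL(2,q)` (so `PSL(2,q) ⊴ G ≤ PΓL(2,q)`):
    (X : Subgroup G) (hXnormal : X.Normal)
    (hXiso : Nonempty (X ≃* PSL2 F))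
    (hXcent : Subgroup.centralizer (X : Set G) = ⊥)
    -- `X` acts point-primitively on `D`, with maximal point stabilizer `X_α`:
    (hXprim : PointPrimitive X Pt)
    (α : Pt) (hmax : IsCoatom (MulAction.stabilizer X α))
    :
    IsEmpty ((MulAction.stabilizer X α) ≃*
      DihedralGroup ((q - 1) / Nat.gcd 2 (q - 1))) := by
  refine ⟨fun e => ?_⟩
  classical
  obtain ⟨iso⟩ := hXiso
  have := hXnormal
  have := hXprim.1
  subst hF hv
  set q := Fintype.card F with hqdef
  obtain ⟨p, hchar⟩ := CharP.exists F
  obtain ⟨f', hp, hqp⟩ := FiniteField.card F p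
  rw [← hqdef] at hqp
  have hpq : p ∣ q := by rw [hqp]; exact dvd_pow_self p f'.ne_zero
  let _ : MulAction X (PLine F) := MulAction.compHom _ iso.toMonoidHom
  have : Fintype (PLine F) := Fintype.ofFinite _
  have : Finite X := Finite.of_equiv _ iso.symm.toEquiv
  have hL := isLineAction_of_iso iso (fun _ _ => rfl) p
  rw [← hqdef] at hL
  set n := (q - 1) / Nat.gcd 2 (q - 1) with hn
  have hstab : Nat.card (MulAction.stabilizer X α) = 2 * n := by
    rw [Nat.card_congr e.toEquiv, DihedralGroup.nat_card]
  have hgn : Nat.gcd 2 (q - 1) * n = q - 1 := Nat.mul_div_cancel' (Nat.gcd_dvd_right _ _)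
  have hgcd : Nat.gcd 2 (q - 1) = 1 ∧ q % 2 = 0 ∨ Nat.gcd 2 (q - 1) = 2 ∧ q % 2 = 1 := by
    rcases Nat.mod_two_eq_zero_or_one q with h | h
    · exact .inl ⟨Nat.coprime_two_left.2 (by rw [Nat.odd_iff]; omega), h⟩
    · exact .inr ⟨Nat.gcd_eq_left (by omega), h⟩
  have hn2 : 2 ≤ n := by
    rcases hgcd with ⟨h, h'⟩ | ⟨h, h'⟩ <;> rw [h] at hgn <;> omega
  obtain ⟨E, hE, hEx⟩ := exists_edgeMap hL hn2 (Dvd.intro_left _ hgn) hq4 hmax e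
  have hv := card_points hL.card hE.card_two hE.inj hE.surj
  have hkr := k_lt_r hD hr hnt.1 hnt.2 hnonsym α
  have hrk := design_r_eq hD hr α
  have hbk := design_bk_eq hD hr
  obtain ⟨s, rfl⟩ := h3r
  have hsk : s * (k - 1) = Nat.card Pt - 1 := by
    rw [mul_assoc] at hrk
    exact Nat.eq_of_mul_eq_mul_left (by norm_num) hrk
  -- For `q = 5` the stabilizer is a Klein four-group, and `Meets` does not detect common vertices.
  by_cases hq5 : q = 5
  · have hv : Nat.card Pt = 15 := by rw [hv, hq5]; rfl
    rw [hv] at hsk hnt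
    obtain ⟨rfl, rfl⟩ := arith_five hnt.1 hnt.2 hsk hkr
    have hn2' : n = 2 := by
      rcases hgcd with ⟨h, h'⟩ | ⟨h, h'⟩ <;> rw [h] at hgn <;> omega
    obtain ⟨B, hB, hαB, hfix⟩ := exists_fixed_block (X := X) (fun x B hB => hacts x B hB)
      (α := α) (MulAction.stabilizer X α)
      (IsPGroup.of_card (n := 2) (by rw [hstab, hn2']; norm_num)) (fun x hx => hx)
      (by rw [hr]; decide)
    have hB3 : B.ncard = 3 := by rw [← Nat.card_coe_set_eq, hD.block_card B hB]
    refine no_stabilized_block hflag X hmax ?_ hB hαB (by omega) ?_ (fun x hx => hfix x hx)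
    · intro h
      rw [h, Subgroup.card_bot] at hstab
      omega
    · rintro rfl
      rw [Set.ncard_univ, hv] at hB3
      omega
  have hn3 : 3 ≤ n := by
    rcases hgcd with ⟨h, h'⟩ | ⟨h, h'⟩ <;> rw [h] at hgn <;> omega
  have hmeet : ∀ B ∈ 𝓑, ∀ β ∈ B,
      s * (B ∩ {γ | γ ≠ β ∧ ∃ w, w ∈ E β ∧ w ∈ E γ}).ncard = 2 * (q - 1) := by
    intro B hB β hβ
    have h1 := card_inter_meet hL hp hpq (by omega) hE (hEx hn3) hD hr hflag hB hβ
    rw [mul_assoc] at h1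
    exact Nat.eq_of_mul_eq_mul_left (by norm_num) h1
  have hs : s ∣ 2 * (q - 1) := by
    obtain ⟨B, hB, hαB⟩ : ∃ B, B ∈ 𝓑 ∧ α ∈ B := by
      have h1 := hr α
      by_contra! hcon
      have h2 : {B : Set Pt | B ∈ 𝓑 ∧ α ∈ B} = ∅ := by
        ext B; simpa using hcon B
      rw [repNum, h2] at h1
      simp at h1
      omega
    exact Dvd.intro _ (hmeet B hB α hαB)
  rw [Nat.choose_two_right, Nat.add_sub_cancel] at hv
  rcases hgcd with ⟨hg, hq2⟩ | ⟨hg, hq2⟩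
  · rw [hg, one_mul] at hgn
    have hp2 : p = 2 := by
      have : 2 ∣ p ^ (f' : ℕ) := by rw [← hqp]; omega
      exact ((Nat.prime_dvd_prime_iff_eq Nat.prime_two hp).1
        (Nat.prime_two.dvd_of_dvd_pow this)).symm
    subst hp2
    obtain ⟨f, hf⟩ : ∃ f, (f' : ℕ) = f + 1 := ⟨f' - 1, by have := f'.pos; omega⟩
    rw [hf, pow_succ'] at hqp
    rw [hqp] at hq4 hv hs hmeet hL hgn
    have hf1 : 1 ≤ f := by
      rcases Nat.eq_zero_or_pos f with rfl | h
      · simp at hq4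
      · exact h
    have hm2 : 2 ∣ 2 ^ f := dvd_pow_self 2 (by omega)
    have hv' : Nat.card Pt = 2 ^ f * (2 * 2 ^ f + 1) := by
      rw [hv]
      apply Nat.div_eq_of_eq_mul_left (by norm_num)
      ring
    have hv1 : Nat.card Pt - 1 = (2 * 2 ^ f - 1) * (2 ^ f + 1) := by
      rw [hv']
      generalize 2 ^ f = m at *
      obtain ⟨t, rfl⟩ : ∃ t, m = t + 2 := ⟨m - 2, by omega⟩
      have : 2 * (t + 2) - 1 = 2 * t + 3 := by omega
      rw [this]
      apply Nat.sub_eq_of_eq_add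
      ring
    obtain ⟨rfl, rfl⟩ := arith_even (by omega) hm2 (hsk.trans hv1) hs hkr
    -- For `q = 4` the parameters `v = 10`, `k = 4`, `r = 9` violate `k ∣ v * r`.
    have hf2 : 2 ≤ f := by
      by_contra hlt
      obtain rfl : f = 1 := by omega
      rw [hv'] at hbk
      norm_num at hbk
      omega
    refine even_case hf2 hL hE hacts hflag hD hr hv' (α := α) (by rw [hstab, hgn]) ?_
    intro B hB β hβ
    have h1 := hmeet B hB β hβ
    rw [mul_comm 2 (2 * 2 ^ f - 1)] at h1
    exact Nat.eq_of_mul_eq_mul_left (by have := Nat.two_pow_pos f; omega) h1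
  · obtain ⟨m, hm⟩ : ∃ m, q = 2 * m + 1 := ⟨q / 2, by omega⟩
    have hv' : Nat.card Pt = (2 * m + 1) * (m + 1) := by
      rw [hv, hm]
      apply Nat.div_eq_of_eq_mul_left (by norm_num)
      ring
    have hv1 : Nat.card Pt - 1 = m * (2 * m + 3) := by
      rw [hv']
      apply Nat.sub_eq_of_eq_add
      ring
    have h1 := arith_odd hnt.1 (hsk.trans hv1) (by rw [hm] at hs; convert hs using 1; omega) hkr
      (hbk.trans (by rw [hv']))
    exact not_isPrimePow_of (q := q) (by omega)
      ((isPrimePow_nat_iff q).2 ⟨p, f', hp, f'.pos, hqp.symm⟩)
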